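/- For every k ∈ ℕ and every p ∈ (p_k, 1/2], the critical value q_c(p) of anisotropic bond percolation on the slab S^k satisfies q_c(p) < 1. -/

import Mathlib

open MeasureTheory Set
open scoped ENNReal

namespace AnisoSlab

/-! ### A concrete construction of countable products of Bernoulli measures

The product Bernoulli measure on `ι → Bool` (each coordinate `i` open with
probability `P i`, independently) is realized as the pushforward of Lebesgue
measure on `[0,1)`: the binary digits of a uniform sample are i.i.d. fair
coins; regrouping them along a pairing function yields countably many
independent uniform samples, and comparing the `i`-th sample with `P i`
yields the desired independent Bernoulli coordinates. -/

/-- The `n`-th binary digit of `x` (digits after the binary point). -/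
noncomputable def binDigit (n : ℕ) (x : ℝ) : Bool :=
  decide (⌊x * 2 ^ (n + 1)⌋ % 2 = 1)

/-- Countably many independent uniform-`[0,1]` samples extracted from a single
uniform sample `x` on `[0,1)`, by regrouping its binary digits. -/
noncomputable def unifSample (i : ℕ) (x : ℝ) : ℝ :=
  ∑' n : ℕ, if binDigit (Nat.pair i n) x then ((2 : ℝ) ^ (n + 1))⁻¹ else 0

/-- The product Bernoulli measure on `ι → Bool`, coordinate `i` being `true`
with probability `P i`, independently over `i`. -/
noncomputable def bernoulliProduct {ι : Type*} [Encodable ι] (P : ι → ℝ) :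
    Measure (ι → Bool) :=
  Measure.map (fun x i => decide (unifSample (Encodable.encode i) x < P i))
    (volume.restrict (Set.Ico (0 : ℝ) 1))

/-! ### The slab `S^k` and anisotropic bond percolation on it -/

/-- Ambient vertices: `ℤ³`; the slab `S^k` uses those with third coordinate in `{0, …, k}`. -/
abbrev Vtx : Type := ℤ × ℤ × ℤ

/-- The three unit coordinate vectors. -/
def dvec : Fin 3 → Vtx
  | 0 => (1, 0, 0)
  | 1 => (0, 1, 0)
  | 2 => (0, 0, 1)

/-- A bond is indexed by its lower endpoint `v` and a direction `i`; it joins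
`v` to `v + dvec i`. Directions `0, 1` give radial (horizontal) bonds, and
direction `2` gives axial (vertical) bonds. -/
abbrev EdgeIdx : Type := Vtx × Fin 3

/-- A percolation configuration: each bond is open (`true`) or closed (`false`). -/
abbrev Config : Type := EdgeIdx → Bool

/-- `v` is a vertex of the slab `S^k`. -/
def InSlab (k : ℕ) (v : Vtx) : Prop := 0 ≤ v.2.2 ∧ v.2.2 ≤ k

/-- `(v, i)` is a bond of the slab `S^k` (both endpoints lie in the slab). -/
def IsEdge (k : ℕ) (e : EdgeIdx) : Prop := InSlab k e.1 ∧ InSlab k (e.1 + dvec e.2)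

/-- The measure `P_{p,q}` on configurations of `S^k`: each radial (horizontal)
bond is open with probability `p` and each axial (vertical) bond is open with
probability `q`, independently. -/
noncomputable def slabMeasure (k : ℕ) (p q : ℝ) : Measure Config :=
  bernoulliProduct (fun e => if e.2 = 2 then q else p)

/-- `x` and `y` are joined by an open bond of `S^k` in the configuration `ω`. -/
def OpenAdj (k : ℕ) (ω : Config) (x y : Vtx) : Prop :=
  ∃ i : Fin 3,
    (y = x + dvec i ∧ IsEdge k (x, i) ∧ ω (x, i) = true) ∨
    (x = y + dvec i ∧ IsEdge k (y, i) ∧ ω (y, i) = true)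

/-- The open cluster of the vertex `x` in the configuration `ω`. -/
def cluster (k : ℕ) (ω : Config) (x : Vtx) : Set Vtx :=
  {y | Relation.ReflTransGen (OpenAdj k ω) x y}

/-- The percolation function `θ(p,q) = P_{p,q}(0 ↔ ∞)`. -/
noncomputable def theta (k : ℕ) (p q : ℝ) : ℝ≥0∞ :=
  slabMeasure k p q {ω | (cluster k ω 0).Infinite}

/-- `p_k = 1 - (1/2)^{1/(k+1)}`, the horizontal critical value at `q = 1`. -/
noncomputable def pCrit (k : ℕ) : ℝ := 1 - (1 / 2 : ℝ) ^ ((1 : ℝ) / (k + 1))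

/-- The critical curve `q_c(p) = sup {q ∈ [0,1] : θ(p,q) = 0}`. -/
noncomputable def qc (k : ℕ) (p : ℝ) : ℝ :=
  sSup {q : ℝ | q ∈ Set.Icc (0 : ℝ) 1 ∧ theta k p q = 0}

/-- The critical curve `p_c(q) = sup {p ∈ [0,1] : θ(p,q) = 0}`. -/
noncomputable def pc (k : ℕ) (q : ℝ) : ℝ :=
  sSup {p : ℝ | p ∈ Set.Icc (0 : ℝ) 1 ∧ theta k p q = 0}


/-- Lebesgue measure on `[0,1)`. -/
noncomputable def leb : Measure ℝ := volume.restrict (Set.Ico (0 : ℝ) 1)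

instance : IsProbabilityMeasure leb := ⟨by simp [leb]⟩

/-- Law of the indicator of `U < p` for uniform `U`. -/
noncomputable def bern (p : ℝ) : Measure Bool := leb.map (fun u => decide (u < p))

lemma measurable_dec (p : ℝ) : Measurable (fun u : ℝ => decide (u < p)) := by
  refine measurable_to_bool ?_
  have : (fun u : ℝ => decide (u < p)) ⁻¹' {true} = Set.Iio p := by ext; simp
  rw [this]; exact measurableSet_Iio

instance (p : ℝ) : IsProbabilityMeasure (bern p) :=
  Measure.isProbabilityMeasure_map (measurable_dec p).aemeasurable

lemma bern_true {p : ℝ} (h1 : p ≤ 1) : bern p {true} = ENNReal.ofReal p := by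
  rw [bern, Measure.map_apply (measurable_dec p) (by simp), leb]
  have : (fun u : ℝ => decide (u < p)) ⁻¹' {true} = Set.Iio p := by ext; simp
  rw [this, Measure.restrict_apply measurableSet_Iio]
  have : Set.Iio p ∩ Set.Ico 0 1 = Set.Ico 0 p := by
    ext x; simp; constructor
    · rintro ⟨a, b, c⟩; exact ⟨b, a⟩
    · rintro ⟨a, b⟩; exact ⟨b, a, by linarith⟩
  rw [this]; simp

lemma bern_real_true {p : ℝ} (h0 : 0 ≤ p) (h1 : p ≤ 1) : (bern p).real {true} = p := by
  rw [measureReal_def, bern_true h1, ENNReal.toReal_ofReal h0]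

lemma bern_real_false {p : ℝ} (h0 : 0 ≤ p) (h1 : p ≤ 1) : (bern p).real {false} = 1 - p := by
  have : ({false} : Set Bool) = {true}ᶜ := by ext b; cases b <;> simp
  rw [this, probReal_compl_eq_one_sub (by simp), bern_real_true h0 h1]

lemma measurable_binDigit (n : ℕ) : Measurable (binDigit n) := by
  refine measurable_to_bool ?_
  have : binDigit n ⁻¹' {true} = (fun x : ℝ => ⌊x * 2 ^ (n + 1)⌋) ⁻¹' {z | z % 2 = 1} := by
    ext; simp [binDigit]
  rw [this]
  exact (Int.measurable_floor.comp (measurable_id.mul_const _)) (MeasurableSet.of_discrete)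

/-- integer given by the first `N` digits. -/
def pref (w : ℕ → Bool) : ℕ → ℤ
  | 0 => 0
  | n + 1 => 2 * pref w n + (if w n then 1 else 0)

lemma pref_bounds (w : ℕ → Bool) (N : ℕ) : 0 ≤ pref w N ∧ pref w N + 1 ≤ 2 ^ N := by
  induction N with
  | zero => simp [pref]
  | succ n ih => simp only [pref, pow_succ]; split_ifs <;> omega

lemma floor_two_mul (y : ℝ) : ⌊y * 2⌋ / 2 = ⌊y⌋ := by
  have h := Int.floor_div_natCast (y * 2) 2
  simp at h
  omega

lemma digits_iff (w : ℕ → Bool) (x : ℝ) (hx : x ∈ Set.Ico (0 : ℝ) 1) (N : ℕ) :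
    (∀ n < N, binDigit n x = w n) ↔ ⌊x * 2 ^ N⌋ = pref w N := by
  induction N with
  | zero =>
    simp [pref]
    exact ⟨hx.1, hx.2⟩
  | succ n ih =>
    have h1 : (∀ m < n + 1, binDigit m x = w m) ↔ (∀ m < n, binDigit m x = w m) ∧ binDigit n x = w n := by
      constructor
      · intro h; exact ⟨fun m hm => h m (by omega), h n (by omega)⟩
      · rintro ⟨h, h'⟩ m hm
        rcases Nat.lt_succ_iff_lt_or_eq.1 hm with h2 | rfl
        · exact h m h2
        · exact h'
    rw [h1, ih]
    have h2 := floor_two_mul (x * 2 ^ n)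
    have h3 : x * 2 ^ n * 2 = x * 2 ^ (n + 1) := by ring
    rw [h3] at h2
    simp only [binDigit, pref]
    cases hw : w n <;> simp <;> omega

/-- The digit map. -/
noncomputable def digs (x : ℝ) : ℕ → Bool := fun n => binDigit n x

lemma measurable_digs : Measurable digs := measurable_pi_lambda _ measurable_binDigit

lemma leb_digits (w : ℕ → Bool) (N : ℕ) :
    leb {x | ∀ n < N, binDigit n x = w n} = ENNReal.ofReal ((1 / 2) ^ N) := by
  have hm : MeasurableSet {x | ∀ n < N, binDigit n x = w n} := by
    have : {x | ∀ n < N, binDigit n x = w n} = ⋂ n : ℕ, ⋂ _ : n < N, binDigit n ⁻¹' {w n} := by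
      ext; simp
    rw [this]
    exact MeasurableSet.iInter fun n => MeasurableSet.iInter fun _ => measurable_binDigit n (by simp)
  rw [leb, Measure.restrict_apply hm]
  have hb := pref_bounds w N
  have hpos : (0 : ℝ) < 2 ^ N := by positivity
  have : {x | ∀ n < N, binDigit n x = w n} ∩ Set.Ico 0 1
      = Set.Ico ((pref w N : ℝ) / 2 ^ N) ((pref w N + 1 : ℝ) / 2 ^ N) := by
    ext x
    have key : ⌊x * 2 ^ N⌋ = pref w N ↔ x ∈ Set.Ico ((pref w N : ℝ) / 2 ^ N) ((pref w N + 1 : ℝ) / 2 ^ N) := by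
      rw [Int.floor_eq_iff, Set.mem_Ico, div_le_iff₀ hpos, lt_div_iff₀ hpos]
    constructor
    · rintro ⟨h, hx⟩
      exact key.1 ((digits_iff w x hx N).1 h)
    · intro h
      have hx : x ∈ Set.Ico (0 : ℝ) 1 := by
        have h0 : (0 : ℝ) ≤ pref w N := by exact_mod_cast hb.1
        have h1 : (pref w N : ℝ) + 1 ≤ 2 ^ N := by exact_mod_cast hb.2
        refine ⟨le_trans (by positivity) h.1, lt_of_lt_of_le h.2 ?_⟩
        rw [div_le_one hpos]; exact h1
      exact ⟨(digits_iff w x hx N).2 (key.2 h), hx⟩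
  rw [this, Real.volume_Ico]
  congr 1
  rw [← sub_div]; simp

lemma digs_law : leb.map digs = Measure.infinitePi (fun _ : ℕ => bern (1 / 2)) := by
  have hhalf : ∀ b : Bool, bern (1 / 2) {b} = ENNReal.ofReal (1 / 2) := by
    intro b
    have h1 := bern_real_true (p := 1 / 2) (by norm_num) (by norm_num)
    have h2 := bern_real_false (p := 1 / 2) (by norm_num) (by norm_num)
    cases b
    · rw [← ENNReal.ofReal_toReal (measure_ne_top (bern (1 / 2)) {false}), ← measureReal_def, h2]
      norm_num
    · rw [← ENNReal.ofReal_toReal (measure_ne_top (bern (1 / 2)) {true}), ← measureReal_def, h1]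
  have hres : ∀ N : ℕ, (leb.map digs).map ((Finset.range N).restrict (π := fun _ => Bool))
      = (Measure.infinitePi (fun _ : ℕ => bern (1 / 2))).map ((Finset.range N).restrict (π := fun _ => Bool)) := by
    intro N
    refine Measure.ext_of_singleton fun η => ?_
    let w : ℕ → Bool := fun n => if h : n ∈ Finset.range N then η ⟨n, h⟩ else false
    rw [Measure.map_apply (by fun_prop) (MeasurableSet.singleton η),
      Measure.map_apply (by fun_prop) (MeasurableSet.singleton η)]
    have hset : (Finset.range N).restrict (π := fun _ => Bool) ⁻¹' {η} = Set.pi (Finset.range N) (fun n => {w n}) := by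
      ext ξ
      simp only [Set.mem_preimage, Set.mem_singleton_iff, Set.mem_pi, Finset.mem_coe]
      constructor
      · rintro rfl n hn
        simp only [w, hn, dif_pos]; rfl
      · intro h
        ext ⟨n, hn⟩
        have := h n hn
        simp only [w, hn, dif_pos] at this
        exact this
    rw [hset, Measure.infinitePi_pi _ (by simp),
      Measure.map_apply measurable_digs (MeasurableSet.pi (Finset.countable_toSet _) (by simp))]
    have : digs ⁻¹' (Set.pi (Finset.range N) (fun n => {w n})) = {x | ∀ n < N, binDigit n x = w n} := by
      ext; simp [digs]
    rw [this, leb_digits]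
    simp only [hhalf]
    rw [Finset.prod_const, Finset.card_range, ENNReal.ofReal_pow (by norm_num)]
  refine Measure.eq_infinitePi _ fun s t ht => ?_
  obtain ⟨N, hN⟩ := s.exists_nat_subset_range
  have hpre : Set.pi (s : Set ℕ) t = (Finset.range N).restrict (π := fun _ => Bool) ⁻¹'
      {η | ∀ n : Finset.range N, n.1 ∈ s → η n ∈ t n.1} := by
    ext ξ
    simp only [Set.mem_preimage, Set.mem_pi, Finset.mem_coe, Set.mem_ofPred_eq]
    exact ⟨fun h n hn => h n.1 hn, fun h n hn => h ⟨n, hN hn⟩ hn⟩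
  rw [← Measure.infinitePi_pi (fun _ : ℕ => bern (1 / 2)) (fun i _ => ht i), hpre,
    ← Measure.map_apply (by fun_prop) (Set.toFinite _).measurableSet,
    ← Measure.map_apply (by fun_prop) (Set.toFinite _).measurableSet, hres N]

/-- The real number with given digits. -/
noncomputable def toR (η : ℕ → Bool) : ℝ := ∑' n : ℕ, if η n then ((2 : ℝ) ^ (n + 1))⁻¹ else 0

lemma measurable_toR : Measurable toR := by
  unfold toR
  refine Measurable.tsum fun n => ?_
  have hs : MeasurableSet {a : ℕ → Bool | a n = true} :=
    (measurable_pi_apply (X := fun _ : ℕ => Bool) n) (MeasurableSet.singleton true)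
  exact Measurable.ite hs
    measurable_const measurable_const

lemma toR_digs {x : ℝ} (hx : x ∈ Set.Ico (0 : ℝ) 1) : toR (digs x) = x := by
  have hsum : ∀ N : ℕ, ∑ n ∈ Finset.range N, (if digs x n then ((2 : ℝ) ^ (n + 1))⁻¹ else 0)
      = ⌊x * 2 ^ N⌋ / 2 ^ N := by
    intro N
    rw [(digits_iff (digs x) x hx N).1 (fun _ _ => rfl)]
    induction N with
    | zero => simp [pref]
    | succ n ih =>
      rw [Finset.sum_range_succ, ih]
      simp only [pref]
      cases digs x n <;> simp <;> field_simp <;> ring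
  have : HasSum (fun n => if digs x n then ((2 : ℝ) ^ (n + 1))⁻¹ else 0) x := by
    rw [hasSum_iff_tendsto_nat_of_nonneg (by intro i; split_ifs <;> positivity)]
    simp_rw [hsum]
    have h2 : Filter.Tendsto (fun N : ℕ => (2 : ℝ) ^ N) Filter.atTop Filter.atTop :=
      tendsto_pow_atTop_atTop_of_one_lt (by norm_num)
    have := (tendsto_nat_floor_mul_div_atTop (R := ℝ) hx.1).comp h2
    refine this.congr fun N => ?_
    simp only [Function.comp]
    congr 1
    exact natCast_floor_eq_intCast_floor (mul_nonneg hx.1 (by positivity))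
  exact this.tsum_eq

lemma toR_law : (Measure.infinitePi (fun _ : ℕ => bern (1 / 2))).map toR = leb := by
  rw [← digs_law, Measure.map_map measurable_toR measurable_digs]
  conv_rhs => rw [← Measure.map_id (μ := leb)]
  refine Measure.map_congr ?_
  rw [leb]
  filter_upwards [ae_restrict_mem measurableSet_Ico] with x hx
  exact toR_digs hx

lemma unif_law : leb.map (fun x i => unifSample i x) = Measure.infinitePi (fun _ : ℕ => leb) := by
  have h1 : (fun x i => unifSample i x)
      = (fun (η : ℕ → ℕ → Bool) i => toR (η i)) ∘ (MeasurableEquiv.curry ℕ ℕ Bool) ∘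
        (fun (η : ℕ → Bool) (q : ℕ × ℕ) => η (Nat.pair q.1 q.2)) ∘ digs := by
    funext x i
    rfl
  have hinj : Function.Injective (fun q : ℕ × ℕ => Nat.pair q.1 q.2) := by
    intro a b h
    have := Nat.pair_eq_pair.1 h
    exact Prod.ext this.1 this.2
  have hm1 : Measurable (fun (η : ℕ → ℕ → Bool) i => toR (η i)) :=
    measurable_pi_lambda _ fun i => measurable_toR.comp (measurable_pi_apply i)
  have hm2 : Measurable (fun (η : ℕ → Bool) (q : ℕ × ℕ) => η (Nat.pair q.1 q.2)) := by fun_prop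
  rw [h1, ← Measure.map_map hm1 ((MeasurableEquiv.measurable _).comp (hm2.comp measurable_digs)),
    ← Measure.map_map (MeasurableEquiv.measurable _) (hm2.comp measurable_digs),
    ← Measure.map_map hm2 measurable_digs, digs_law,
    Measure.map_infinitePi_infinitePi_of_inj hinj]
  have := Measure.infinitePi_map_curry (fun (_ _ : ℕ) => bern (1 / 2))
  rw [this, Measure.infinitePi_map_pi _ (fun _ => measurable_toR)]
  simp_rw [toR_law]

lemma bernoulliProduct_eq {ι : Type*} [Encodable ι] (P : ι → ℝ) :
    bernoulliProduct P = Measure.infinitePi (fun i => bern (P i)) := by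
  have hm0 : Measurable (fun (x : ℝ) (i : ℕ) => unifSample i x) := by
    refine measurable_pi_lambda _ fun i => ?_
    exact measurable_toR.comp (measurable_pi_lambda _ fun n => measurable_binDigit _)
  have hm1 : Measurable (fun (u : ℕ → ℝ) (i : ι) => u (Encodable.encode i)) := by fun_prop
  have hm2 : Measurable (fun (u : ι → ℝ) (i : ι) => decide (u i < P i)) :=
    measurable_pi_lambda _ fun i => (measurable_dec (P i)).comp (measurable_pi_apply i)
  have h1 : (fun (x : ℝ) (i : ι) => decide (unifSample (Encodable.encode i) x < P i))
    = (fun (u : ι → ℝ) (i : ι) => decide (u i < P i)) ∘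
      (fun (u : ℕ → ℝ) (i : ι) => u (Encodable.encode i)) ∘ (fun x i => unifSample i x) := rfl
  have h2 : bernoulliProduct P = leb.map
    (fun (x : ℝ) (i : ι) => decide (unifSample (Encodable.encode i) x < P i)) := rfl
  rw [h2, h1, ← Measure.map_map hm2 (hm1.comp hm0), ← Measure.map_map hm1 hm0, unif_law,
    Measure.map_infinitePi_infinitePi_of_inj Encodable.encode_injective,
    Measure.infinitePi_map_pi (f := fun i (u : ℝ) => decide (u < P i)) _ (fun i => measurable_dec (P i))]
  rfl

/-- The event `A` only depends on the coordinates in `I`. -/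
def DepOn {ι : Type*} (A : Set (ι → Bool)) (I : Set ι) : Prop :=
  ∀ ω ω' : ι → Bool, (∀ e ∈ I, ω e = ω' e) → ω ∈ A → ω' ∈ A

lemma DepOn.measurable_iSup {ι : Type*} {A : Set (ι → Bool)} {I : Set ι} (hA : MeasurableSet A)
    (dA : DepOn A I) :
    MeasurableSet[⨆ i ∈ I, MeasurableSpace.comap (fun ω : ι → Bool => ω i) inferInstance] A := by
  classical
  let M : (ι → Bool) → (ι → Bool) := fun ω i => if i ∈ I then ω i else false
  have hM : Measurable[⨆ i ∈ I, MeasurableSpace.comap (fun ω : ι → Bool => ω i) inferInstance] M := by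
    refine @measurable_pi_lambda _ _ _ (_) _ _ fun i => ?_
    by_cases hi : i ∈ I
    · have : (fun ω => M ω i) = fun ω => ω i := by funext ω; simp [M, hi]
      rw [this]
      refine Measurable.mono (comap_measurable (fun ω : ι → Bool => ω i)) ?_ le_rfl
      exact le_iSup₂_of_le i hi le_rfl
    · have : (fun ω => M ω i) = fun ω => false := by funext ω; simp [M, hi]
      rw [this]
      exact measurable_const
  have hpre : A = M ⁻¹' A := by
    ext ω
    constructor
    · exact dA _ _ (fun e he => by simp [M, he])
    · exact dA _ _ (fun e he => by simp [M, he])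
  rw [hpre]
  exact hM hA

lemma indep_real {ι : Type*} (P : ι → Measure Bool) [∀ i, IsProbabilityMeasure (P i)]
    {A B : Set (ι → Bool)} {I J : Set ι} (hA : MeasurableSet A) (hB : MeasurableSet B)
    (dA : DepOn A I) (dB : DepOn B J) (h : Disjoint I J) :
    (Measure.infinitePi P).real (A ∩ B)
      = (Measure.infinitePi P).real A * (Measure.infinitePi P).real B := by
  have h1 : ProbabilityTheory.iIndepFun (fun i (ω : ι → Bool) => ω i) (Measure.infinitePi P) :=
    ProbabilityTheory.iIndepFun_infinitePi (X := fun _ b => b) (fun _ => measurable_id)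
  have h2 := ProbabilityTheory.indep_iSup_of_disjoint
    (fun i => (measurable_pi_apply (X := fun _ : ι => Bool) i).comap_le) h1 h
  have := (ProbabilityTheory.Indep_iff _ _ _).1 h2 A B (dA.measurable_iSup hA) (dB.measurable_iSup hB)
  simp only [measureReal_def, this, ENNReal.toReal_mul]

/-- Law of block functions. -/
lemma block_law {ι κ α : Type*} (P : ι → Measure Bool) [∀ i, IsProbabilityMeasure (P i)]
    (f : α × κ → ι) (hf : Function.Injective f) (g : α → (κ → Bool) → Bool)
    (hg : ∀ a, Measurable (g a)) :
    (Measure.infinitePi P).map (fun ω a => g a (fun j => ω (f (a, j))))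
      = Measure.infinitePi (fun a => (Measure.infinitePi (fun j => P (f (a, j)))).map (g a)) := by
  have h1 : (fun (ω : ι → Bool) a => g a (fun j => ω (f (a, j))))
      = (fun (η : α → κ → Bool) a => g a (η a)) ∘ (MeasurableEquiv.curry α κ Bool) ∘
        (fun (ω : ι → Bool) q => ω (f q)) := rfl
  have hm1 : Measurable (fun (η : α → κ → Bool) a => g a (η a)) :=
    measurable_pi_lambda _ fun a => (hg a).comp (measurable_pi_apply a)
  have hm2 : Measurable (fun (ω : ι → Bool) q => ω (f q)) := by fun_prop
  rw [h1, ← Measure.map_map hm1 ((MeasurableEquiv.measurable _).comp hm2),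
    ← Measure.map_map (MeasurableEquiv.measurable _) hm2,
    Measure.map_infinitePi_infinitePi_of_inj hf]
  have := Measure.infinitePi_map_curry (fun (a : α) (j : κ) => P (f (a, j)))
  rw [this, Measure.infinitePi_map_pi _ hg]

lemma measure_bool_ext {μ ν : Measure Bool} [IsProbabilityMeasure μ] [IsProbabilityMeasure ν]
    (h : μ.real {true} = ν.real {true}) : μ = ν := by
  refine Measure.ext_of_singleton fun b => ?_
  have hf : ({false} : Set Bool) = {true}ᶜ := by ext b; cases b <;> simp
  have h' : μ.real {b} = ν.real {b} := by
    cases b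
    · rw [hf, probReal_compl_eq_one_sub (by simp), probReal_compl_eq_one_sub (by simp), h]
    · exact h
  rwa [measureReal_def, measureReal_def, ENNReal.toReal_eq_toReal_iff' (measure_ne_top _ _) (measure_ne_top _ _)] at h'

/-! ### Bond percolation on the square lattice; the bond `xy` is indexed by `x + y`. -/

abbrev V2 : Type := ℤ × ℤ

def dirs : Finset V2 := {(1, 0), (-1, 0), (0, 1), (0, -1)}

lemma mem_dirs (d : V2) : d ∈ dirs ↔ (d.1 = 1 ∧ d.2 = 0) ∨ (d.1 = -1 ∧ d.2 = 0) ∨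
    (d.1 = 0 ∧ d.2 = 1) ∨ (d.1 = 0 ∧ d.2 = -1) := by
  simp [dirs, Prod.ext_iff]

def Adj (ω : V2 → Bool) (D : Set V2) (x y : V2) : Prop :=
  x ∈ D ∧ y ∈ D ∧ y - x ∈ dirs ∧ ω (x + y) = true

def Conn (ω : V2 → Bool) (D : Set V2) (x y : V2) : Prop := Relation.ReflTransGen (Adj ω D) x y

def edgesIn (D : Set V2) : Set V2 := {e | ∃ x ∈ D, ∃ y ∈ D, y - x ∈ dirs ∧ e = x + y}

lemma neg_dirs {x y : V2} (h : y - x ∈ dirs) : x - y ∈ dirs := by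
  rw [mem_dirs] at *; simp at *; omega

lemma edge_inj {x y a b : V2} (h : y - x ∈ dirs) (h' : b - a ∈ dirs) (he : x + y = a + b) :
    (x = a ∧ y = b) ∨ (x = b ∧ y = a) := by
  rw [mem_dirs] at *
  simp only [Prod.ext_iff, Prod.fst_sub, Prod.snd_sub, Prod.fst_add, Prod.snd_add] at *
  omega

lemma Adj.symm {ω : V2 → Bool} {D : Set V2} {x y : V2} (h : Adj ω D x y) : Adj ω D y x :=
  ⟨h.2.1, h.1, neg_dirs h.2.2.1, by rw [add_comm]; exact h.2.2.2⟩

lemma Conn.symm {ω : V2 → Bool} {D : Set V2} {x y : V2} (h : Conn ω D x y) : Conn ω D y x := by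
  induction h with
  | refl => exact Relation.ReflTransGen.refl
  | tail _ h2 ih => exact Relation.ReflTransGen.head h2.symm ih

lemma Conn.mono {ω : V2 → Bool} {D D' : Set V2} (hD : D ⊆ D') {x y : V2} (h : Conn ω D x y) :
    Conn ω D' x y :=
  Relation.ReflTransGen.mono (fun _ _ h => ⟨hD h.1, hD h.2.1, h.2.2⟩) _ _ h

lemma Conn.trans {ω : V2 → Bool} {D : Set V2} {x y z : V2} (h : Conn ω D x y) (h' : Conn ω D y z) :
    Conn ω D x z := Relation.ReflTransGen.trans h h'

lemma Conn.congr {ω ω' : V2 → Bool} {D : Set V2}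
    (hω : ∀ e ∈ edgesIn D, ω e = true → ω' e = true) {x y : V2} (h : Conn ω D x y) : Conn ω' D x y :=
  Relation.ReflTransGen.mono
    (fun a b h => ⟨h.1, h.2.1, h.2.2.1, hω _ ⟨a, h.1, b, h.2.1, h.2.2.1, rfl⟩ h.2.2.2⟩) _ _ h

lemma Conn.mem {ω : V2 → Bool} {D : Set V2} {x y : V2} (h : Conn ω D x y) (hx : x ∈ D) : y ∈ D := by
  induction h with
  | refl => exact hx
  | tail _ h2 _ => exact h2.2.1

lemma depOn_conn (D : Set V2) (x y : V2) : DepOn {ω | Conn ω D x y} (edgesIn D) :=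
  fun _ _ h hω => Conn.congr (fun e he h' => by rw [← h e he]; exact h') hω

lemma measurableSet_edge (e : V2) : MeasurableSet {ω : V2 → Bool | ω e = true} :=
  (measurable_pi_apply (X := fun _ : V2 => Bool) e) (MeasurableSet.singleton true)

lemma measurableSet_adj (D : Set V2) (x y : V2) : MeasurableSet {ω | Adj ω D x y} := by
  by_cases h : x ∈ D ∧ y ∈ D ∧ y - x ∈ dirs
  · have : {ω | Adj ω D x y} = {ω : V2 → Bool | ω (x + y) = true} := by
      ext ω; simp [Adj, h]
    rw [this]; exact measurableSet_edge _
  · have : {ω | Adj ω D x y} = ∅ := by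
      ext ω
      simp only [Set.mem_ofPred_eq, Set.mem_empty_iff_false, iff_false]
      intro h'
      exact h ⟨h'.1, h'.2.1, h'.2.2.1⟩
    rw [this]; exact MeasurableSet.empty

/-- reachable in exactly `n` steps -/
def Reach (ω : V2 → Bool) (D : Set V2) (x : V2) : ℕ → V2 → Prop
  | 0, y => x = y
  | n + 1, y => ∃ z, Reach ω D x n z ∧ Adj ω D z y

lemma conn_iff_reach (ω : V2 → Bool) (D : Set V2) (x y : V2) :
    Conn ω D x y ↔ ∃ n, Reach ω D x n y := by
  constructor
  · intro h
    induction h with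
    | refl => exact ⟨0, rfl⟩
    | tail _ h2 ih =>
      obtain ⟨n, hn⟩ := ih
      exact ⟨n + 1, _, hn, h2⟩
  · rintro ⟨n, hn⟩
    induction n generalizing y with
    | zero => cases hn; exact Relation.ReflTransGen.refl
    | succ n ih =>
      obtain ⟨z, hz, hzy⟩ := hn
      exact Relation.ReflTransGen.tail (ih z hz) hzy

lemma measurableSet_conn (D : Set V2) (x y : V2) : MeasurableSet {ω | Conn ω D x y} := by
  have hR : ∀ n y, MeasurableSet {ω | Reach ω D x n y} := by
    intro n
    induction n with
    | zero => intro y; simp only [Reach]; exact MeasurableSet.const _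
    | succ n ih =>
      intro y
      have : {ω | Reach ω D x (n + 1) y} = ⋃ z, ({ω | Reach ω D x n z} ∩ {ω | Adj ω D z y}) := by
        ext ω; simp [Reach]
      rw [this]
      exact MeasurableSet.iUnion fun z => (ih z).inter (measurableSet_adj D z y)
  have : {ω | Conn ω D x y} = ⋃ n, {ω | Reach ω D x n y} := by
    ext ω; simp [conn_iff_reach]
  rw [this]
  exact MeasurableSet.iUnion fun n => hR n y

/-- The event that `x` is connected inside `D` to a vertex of `B`. -/
def ConnTo (D B : Set V2) (x : V2) : Set (V2 → Bool) := {ω | ∃ b ∈ B, Conn ω D x b}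

lemma measurableSet_connTo (D B : Set V2) (x : V2) : MeasurableSet (ConnTo D B x) := by
  have : ConnTo D B x = ⋃ b, ⋃ _ : b ∈ B, {ω | Conn ω D x b} := by
    ext ω; simp [ConnTo]
  rw [this]
  exact MeasurableSet.iUnion fun b => MeasurableSet.iUnion fun _ => measurableSet_conn D x b

lemma depOn_connTo (D B : Set V2) (x : V2) : DepOn (ConnTo D B x) (edgesIn D) := by
  rintro ω ω' h ⟨b, hb, hc⟩
  exact ⟨b, hb, depOn_conn D x b ω ω' h hc⟩

/-- Bond percolation measure. -/
noncomputable def perc (p : ℝ) : Measure (V2 → Bool) := Measure.infinitePi (fun _ : V2 => bern p)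

instance (p : ℝ) : IsProbabilityMeasure (perc p) := by unfold perc; infer_instance

lemma perc_indep (p : ℝ) {A B : Set (V2 → Bool)} {I J : Set V2} (hA : MeasurableSet A)
    (hB : MeasurableSet B) (dA : DepOn A I) (dB : DepOn B J) (h : Disjoint I J) :
    (perc p).real (A ∩ B) = (perc p).real A * (perc p).real B := indep_real _ hA hB dA dB h

lemma perc_edge {p : ℝ} (h0 : 0 ≤ p) (h1 : p ≤ 1) (e : V2) :
    (perc p).real {ω | ω e = true} = p := by
  have := (measurePreserving_eval_infinitePi (fun _ : V2 => bern p) e)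
  have h2 := this.measureReal_preimage (s := {true}) (by simp)
  rw [bern_real_true h0 h1] at h2
  exact h2

/-- The box of radius `n`. -/
def box (n : ℕ) : Set V2 := {v | -(n : ℤ) ≤ v.1 ∧ v.1 ≤ n ∧ -(n : ℤ) ≤ v.2 ∧ v.2 ≤ n}

/-- shifted configuration -/
def shift (v : V2) (ω : V2 → Bool) : V2 → Bool := fun e => ω (e + v + v)

lemma perc_shift (p : ℝ) (v : V2) : (perc p).map (shift v) = perc p := by
  unfold perc shift
  exact Measure.map_infinitePi_infinitePi_of_inj (P := fun _ : V2 => bern p)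
    (f := fun e => e + v + v) (fun a b h => by simpa using h)

lemma measurable_shift (v : V2) : Measurable (shift v) := by unfold shift; fun_prop

lemma conn_shift {ω : V2 → Bool} {v x y : V2} (h : Conn ω Set.univ (x + v) (y + v)) :
    Conn (shift v ω) Set.univ x y := by
  have : ∀ a b, Conn ω Set.univ a b → Conn (shift v ω) Set.univ (a - v) (b - v) := by
    intro a b hab
    refine Relation.ReflTransGen.lift (fun z => z - v) ?_ _ _ hab
    intro a b h
    refine ⟨trivial, trivial, by simpa using h.2.2.1, ?_⟩
    have : a - v + (b - v) + v + v = a + b := by abel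
    simp only [shift, this]; exact h.2.2.2
  simpa using this _ _ h

/-- one-arm probability -/
noncomputable def arm (p : ℝ) (n : ℕ) : ℝ := (perc p).real (ConnTo Set.univ (box n)ᶜ 0)

/-- translation bound -/
lemma arm_translate (p : ℝ) (n : ℕ) (v : V2) (B : Set V2) (hB : ∀ b ∈ B, b - v ∉ box n) :
    (perc p).real (ConnTo Set.univ B v) ≤ arm p n := by
  unfold arm
  conv_rhs => rw [← perc_shift p v]
  rw [map_measureReal_apply (measurable_shift v) (measurableSet_connTo _ _ _)]
  refine measureReal_mono ?_
  rintro ω ⟨b, hb, hc⟩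
  exact ⟨b - v, hB b hb, conn_shift (by simpa using hc)⟩

/-- The functional of Duminil-Copin and Tassion. -/
noncomputable def phi (p : ℝ) (S : Finset V2) : ℝ :=
  p * ∑ x ∈ S, ∑ _d ∈ dirs.filter (fun d => x + d ∉ S), (perc p).real {ω | Conn ω (S : Set V2) 0 x}

lemma last_exit {ω : V2 → Bool} {C : Set V2} {a b : V2} (hb : b ∉ C) (h : Conn ω Set.univ a b) :
    (a ∉ C ∧ Conn ω Cᶜ a b) ∨ ∃ x ∈ C, ∃ y, y ∉ C ∧ y - x ∈ dirs ∧ ω (x + y) = true ∧ Conn ω Cᶜ y b := by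
  induction h using Relation.ReflTransGen.head_induction_on with
  | refl => exact Or.inl ⟨hb, Relation.ReflTransGen.refl⟩
  | head h1 h1' ih =>
    rename_i a c
    rcases ih with ⟨hc, hcb⟩ | h
    · by_cases ha : a ∈ C
      · exact Or.inr ⟨a, ha, c, hc, h1.2.2.1, h1.2.2.2, hcb⟩
      · exact Or.inl ⟨ha, Relation.ReflTransGen.head ⟨ha, hc, h1.2.2⟩ hcb⟩
    · exact Or.inr h

/-- The cluster of `0` inside `S` is exactly `C`. -/
def clIs (S C : Finset V2) : Set (V2 → Bool) := {ω | ∀ x ∈ S, (Conn ω (S : Set V2) 0 x ↔ x ∈ C)}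

lemma measurableSet_clIs (S C : Finset V2) : MeasurableSet (clIs S C) := by
  have : clIs S C = ⋂ x : V2, ⋂ _ : x ∈ S, {ω | Conn ω (S : Set V2) 0 x ↔ x ∈ C} := by
    ext ω; simp [clIs]
  rw [this]
  refine MeasurableSet.iInter fun x => MeasurableSet.iInter fun _ => ?_
  by_cases hx : x ∈ C
  · simp only [hx, iff_true]; exact measurableSet_conn _ _ _
  · simp only [hx, iff_false]; exact (measurableSet_conn _ _ _).compl

lemma depOn_clIs {S C : Finset V2} (h0 : (0 : V2) ∈ S) :
    DepOn (clIs S C) {e | ∃ a ∈ C, ∃ b ∈ S, b - a ∈ dirs ∧ e = a + b} := by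
  intro ω ω' h hω x hx
  rw [← hω x hx]
  have key1 : ∀ y, Conn ω' (S : Set V2) 0 y → Conn ω (S : Set V2) 0 y := by
    intro y hy
    induction hy with
    | refl => exact Relation.ReflTransGen.refl
    | tail g0 g ih =>
      rename_i z y
      refine Relation.ReflTransGen.tail ih ⟨g.1, g.2.1, g.2.2.1, ?_⟩
      rw [h _ ⟨z, (hω z g.1).1 ih, y, g.2.1, g.2.2.1, rfl⟩]
      exact g.2.2.2
  have key2 : ∀ y, Conn ω (S : Set V2) 0 y → Conn ω' (S : Set V2) 0 y := by
    intro y hy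
    induction hy with
    | refl => exact Relation.ReflTransGen.refl
    | tail g0 g ih =>
      rename_i z y
      refine Relation.ReflTransGen.tail ih ⟨g.1, g.2.1, g.2.2.1, ?_⟩
      rw [← h _ ⟨z, (hω z g.1).1 g0, y, g.2.1, g.2.2.1, rfl⟩]
      exact g.2.2.2
  exact ⟨key1 x, key2 x⟩

lemma sum_clIs_le (p : ℝ) (S : Finset V2) {x : V2} (hx : x ∈ S) :
    ∑ C ∈ S.powerset.filter (fun C => x ∈ C), (perc p).real (clIs S C)
      ≤ (perc p).real {ω | Conn ω (S : Set V2) 0 x} := by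
  rw [← measureReal_biUnion_finset]
  · refine measureReal_mono ?_
    intro ω hω
    simp only [Set.mem_iUnion, Finset.mem_filter, Finset.mem_powerset] at hω
    obtain ⟨C, ⟨_, hxC⟩, hC⟩ := hω
    exact (hC x hx).2 hxC
  · intro C hC C' hC' hne
    refine Set.disjoint_left.2 fun ω h1 h2 => hne ?_
    simp only [Finset.coe_filter, Finset.mem_powerset, Set.mem_ofPred_eq] at hC hC'
    ext y
    constructor
    · intro hy
      exact (h2 y (hC.1 hy)).1 ((h1 y (hC.1 hy)).2 hy)
    · intro hy
      exact (h1 y (hC'.1 hy)).1 ((h2 y (hC'.1 hy)).2 hy)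
  · intro C _
    exact measurableSet_clIs S C

lemma box_add {a b : V2} {n m : ℕ} (ha : a ∈ box n) (hb : b ∈ box m) : a + b ∈ box (n + m) := by
  simp only [box, Set.mem_ofPred_eq, Prod.fst_add, Prod.snd_add] at *
  push_cast
  omega

lemma depOn_mono {ι : Type*} {A : Set (ι → Bool)} {I J : Set ι} (h : DepOn A I) (hIJ : I ⊆ J) :
    DepOn A J := fun ω ω' g => h ω ω' (fun e he => g e (hIJ he))

lemma depOn_inter {ι : Type*} {A B : Set (ι → Bool)} {I J : Set ι} (h : DepOn A I)
    (h' : DepOn B J) : DepOn (A ∩ B) (I ∪ J) :=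
  fun ω ω' g hω => ⟨h ω ω' (fun e he => g e (Or.inl he)) hω.1, h' ω ω' (fun e he => g e (Or.inr he)) hω.2⟩

lemma depOn_edge (e : V2) : DepOn {ω : V2 → Bool | ω e = true} {e} :=
  fun ω ω' g hω => by
    have := g e rfl
    simp only [Set.mem_ofPred_eq] at *
    rw [← this]; exact hω

lemma arm_step {p : ℝ} (hp0 : 0 ≤ p) (hp1 : p ≤ 1) (S : Finset V2) (h0 : (0 : V2) ∈ S) (L : ℕ)
    (hS : ∀ x ∈ S, x ∈ box L) (hS' : ∀ x ∈ S, ∀ d ∈ dirs, x + d ∈ box L) (R : ℕ) :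
    arm p (R + L) ≤ phi p S * arm p R := by
  classical
  have hsub : ConnTo Set.univ (box (R + L))ᶜ 0 ⊆
      ⋃ x ∈ S, ⋃ d ∈ dirs.filter (fun d => x + d ∉ S), ⋃ C ∈ S.powerset.filter (fun C => x ∈ C),
        (clIs S C ∩ ({ω | ω (x + (x + d)) = true} ∩ ConnTo (C : Set V2)ᶜ (box (R + L))ᶜ (x + d))) := by
    rintro ω ⟨b, hb, hc⟩
    let C : Finset V2 := S.filter (fun x => Conn ω (S : Set V2) 0 x)
    have hCS : C ⊆ S := Finset.filter_subset _ _
    have hbC : b ∉ (C : Set V2) := by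
      intro h
      have h1 := hS b (hCS h)
      apply hb
      simp only [box, Set.mem_ofPred_eq] at h1 ⊢
      push_cast; omega
    have h0C : (0 : V2) ∈ C := by
      simp only [C, Finset.mem_filter]; exact ⟨h0, Relation.ReflTransGen.refl⟩
    rcases last_exit hbC hc with ⟨h, _⟩ | ⟨x, hx, y, hy, hd, ho, hyb⟩
    · exact absurd h0C h
    · have hx' : x ∈ S ∧ Conn ω (S : Set V2) 0 x := by simpa [C] using hx
      have hyS : y ∉ S := by
        intro hyS
        apply hy
        have : Conn ω (S : Set V2) 0 y := Relation.ReflTransGen.tail hx'.2 ⟨hx'.1, hyS, hd, ho⟩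
        simp only [C, Finset.coe_filter, Set.mem_ofPred_eq]
        exact ⟨hyS, this⟩
      simp only [Set.mem_iUnion]
      refine ⟨x, hx'.1, y - x, ?_, C, ?_, ?_, ?_, ?_⟩
      · simp [hd, hyS]
      · simp only [Finset.mem_filter, Finset.mem_powerset]; exact ⟨hCS, hx⟩
      · intro z hz
        simp [C, hz]
      · simpa using ho
      · exact ⟨b, hb, by simpa using hyb⟩
  have hterm : ∀ x ∈ S, ∀ d ∈ dirs.filter (fun d => x + d ∉ S),
      ∀ C ∈ S.powerset.filter (fun C => x ∈ C),
      (perc p).real (clIs S C ∩ ({ω | ω (x + (x + d)) = true} ∩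
        ConnTo (C : Set V2)ᶜ (box (R + L))ᶜ (x + d))) ≤ (perc p).real (clIs S C) * (p * arm p R) := by
    intro x hx d hd C hC
    simp only [Finset.mem_filter, Finset.mem_powerset] at hd hC
    have hdir : (x + d) - x ∈ dirs := by simpa using hd.1
    rw [perc_indep p (measurableSet_clIs S C)
      ((measurableSet_edge _).inter (measurableSet_connTo _ _ _)) (depOn_clIs h0)
      (depOn_inter (depOn_edge _) (depOn_connTo _ _ _)),
      perc_indep p (measurableSet_edge _) (measurableSet_connTo _ _ _) (depOn_edge _)
        (depOn_connTo _ _ _), perc_edge hp0 hp1]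
    · refine mul_le_mul_of_nonneg_left (mul_le_mul_of_nonneg_left ?_ hp0) measureReal_nonneg
      refine le_trans (measureReal_mono ?_) (arm_translate p R (x + d) (box (R + L))ᶜ ?_)
      · rintro ω ⟨b, hb, hc⟩
        exact ⟨b, hb, hc.mono (Set.subset_univ _)⟩
      · intro b hb hb'
        apply hb
        have := box_add hb' (hS' x hx d hd.1)
        simpa using this
    · rw [Set.disjoint_left]
      rintro e he ⟨a, ha, b, hb, hab, he'⟩
      rw [Set.mem_singleton_iff] at he
      rw [he] at he'
      rcases edge_inj hdir hab he' with ⟨h1, _⟩ | ⟨h1, _⟩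
      · exact ha (h1 ▸ hC.2)
      · exact hb (h1 ▸ hC.2)
    · rw [Set.disjoint_left]
      rintro e ⟨a, ha, b, hb, hab, rfl⟩ (he | ⟨u, hu, v, hv, huv, he⟩)
      · rw [Set.mem_singleton_iff] at he
        rcases edge_inj hab hdir he with ⟨_, h1⟩ | ⟨h1, _⟩
        · exact hd.2 (h1 ▸ hb)
        · exact hd.2 (h1 ▸ hC.1 ha)
      · rcases edge_inj hab huv he with ⟨h1, _⟩ | ⟨h1, _⟩
        · exact hu (h1 ▸ ha)
        · exact hv (h1 ▸ ha)
  have harm : 0 ≤ arm p R := measureReal_nonneg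
  calc arm p (R + L) ≤ _ := measureReal_mono hsub (measure_ne_top _ _)
    _ ≤ ∑ x ∈ S, ∑ d ∈ dirs.filter (fun d => x + d ∉ S), ∑ C ∈ S.powerset.filter (fun C => x ∈ C),
        (perc p).real (clIs S C) * (p * arm p R) := by
        refine le_trans (measureReal_biUnion_finset_le _ _) (Finset.sum_le_sum fun x hx => ?_)
        refine le_trans (measureReal_biUnion_finset_le _ _) (Finset.sum_le_sum fun d hd => ?_)
        refine le_trans (measureReal_biUnion_finset_le _ _) (Finset.sum_le_sum fun C hC => ?_)
        exact hterm x hx d hd C hC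
    _ ≤ ∑ x ∈ S, ∑ d ∈ dirs.filter (fun d => x + d ∉ S),
        (perc p).real {ω | Conn ω (S : Set V2) 0 x} * (p * arm p R) := by
        refine Finset.sum_le_sum fun x hx => Finset.sum_le_sum fun d _ => ?_
        rw [← Finset.sum_mul]
        exact mul_le_mul_of_nonneg_right (sum_clIs_le p S hx) (mul_nonneg hp0 harm)
    _ = phi p S * arm p R := by
        simp only [phi, ← Finset.sum_mul]
        ring

/-! ### Duality -/

lemma no_crossing_pair (n : ℕ) (a d : ℕ → ℕ → ℤ)
    (hH : ∀ i < n, ∀ j ≤ n, (a (i + 1) j - a i j) * (d i (j + 1) - d i j) = 0)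
    (hV : ∀ i, i + 1 < n → ∀ j < n, (a (i + 1) (j + 1) - a (i + 1) j) * (d (i + 1) (j + 1) - d i (j + 1)) = 0)
    (hl : ∀ j ≤ n, a 0 j = 1) (hr : ∀ j ≤ n, a n j = 0)
    (ht : ∀ i < n, d i (n + 1) = 1) (hb : ∀ i < n, d i 0 = 0) : False := by
  have hn : n ≠ 0 := by
    rintro rfl
    have h1 := hl 0 le_rfl
    have h2 := hr 0 le_rfl
    omega
  have hF : ∀ j ≤ n, ∑ i ∈ Finset.range n, (a (i + 1) j - a i j) * d i (j + 1) = 0 := by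
    intro j
    induction j with
    | zero =>
      intro _
      refine Finset.sum_eq_zero fun i hi => ?_
      have hi := Finset.mem_range.1 hi
      have := hH i hi 0 (by omega)
      rw [hb i hi] at this
      simpa using this
    | succ j ih =>
      intro hj
      have ih := ih (by omega)
      have tele : ∀ m, m + 1 ≤ n → ∑ i ∈ Finset.range (m + 1),
          ((a (i + 1) (j + 1) - a (i + 1) j) - (a i (j + 1) - a i j)) * d i (j + 1)
          = (a (m + 1) (j + 1) - a (m + 1) j) * d m (j + 1) - (a 0 (j + 1) - a 0 j) * d 0 (j + 1) := by
        intro m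
        induction m with
        | zero => intro _; simp; ring
        | succ m ihm =>
          intro hm
          rw [Finset.sum_range_succ, ihm (by omega)]
          have := hV m (by omega) j (by omega)
          linear_combination (-1) * this
      obtain ⟨m, rfl⟩ := Nat.exists_eq_succ_of_ne_zero hn
      have t := tele m le_rfl
      rw [hl (j + 1) hj, hl j (by omega), hr (j + 1) hj, hr j (by omega)] at t
      have e1 : ∑ i ∈ Finset.range (m + 1), (a (i + 1) (j + 1) - a i (j + 1)) * d i (j + 1 + 1)
          = ∑ i ∈ Finset.range (m + 1), (a (i + 1) (j + 1) - a i (j + 1)) * d i (j + 1) := by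
        refine Finset.sum_congr rfl fun i hi => ?_
        have := hH i (Finset.mem_range.1 hi) (j + 1) hj
        linear_combination this
      have t0 : ∑ i ∈ Finset.range (m + 1),
          ((a (i + 1) (j + 1) - a (i + 1) j) - (a i (j + 1) - a i j)) * d i (j + 1) = 0 := by
        rw [t]; ring
      have t1 : ∑ i ∈ Finset.range (m + 1), (a (i + 1) (j + 1) - a i (j + 1)) * d i (j + 1)
          - ∑ i ∈ Finset.range (m + 1), (a (i + 1) j - a i j) * d i (j + 1) = 0 := by
        rw [← Finset.sum_sub_distrib, ← t0]
        refine Finset.sum_congr rfl fun i _ => ?_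
        ring
      simp only [Nat.succ_eq_add_one] at *
      linarith
  have h1 := hF n le_rfl
  have h2 : ∑ i ∈ Finset.range n, (a (i + 1) n - a i n) * d i (n + 1)
      = ∑ i ∈ Finset.range n, (a (i + 1) n - a i n) := by
    refine Finset.sum_congr rfl fun i hi => ?_
    rw [ht i (Finset.mem_range.1 hi), mul_one]
  rw [h2, Finset.sum_range_sub (fun i => a i n), hl n le_rfl, hr n le_rfl] at h1
  omega

/-- dual configuration -/
def dual (ω : V2 → Bool) : V2 → Bool := fun e => !ω (e + (1, 1))

lemma measurable_dual : Measurable dual := by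
  refine measurable_pi_lambda _ fun e => ?_
  exact (Measurable.of_discrete (f := fun b : Bool => !b)).comp (measurable_pi_apply _)

lemma perc_dual : (perc (1 / 2)).map dual = perc (1 / 2) := by
  have h1 : dual = (fun (ω : V2 → Bool) e => !ω e) ∘ (fun (ω : V2 → Bool) e => ω (e + (1, 1))) := rfl
  have hm : Measurable (fun (ω : V2 → Bool) e => !ω e) :=
    measurable_pi_lambda _ fun e =>
      (Measurable.of_discrete (f := fun b : Bool => !b)).comp (measurable_pi_apply _)
  have hm2 : Measurable (fun (ω : V2 → Bool) (e : V2) => ω (e + (1, 1))) := by fun_prop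
  have hb : (bern (1 / 2)).map (fun b => !b) = bern (1 / 2) := by
    have : IsProbabilityMeasure ((bern (1 / 2)).map (fun b => !b)) :=
      Measure.isProbabilityMeasure_map Measurable.of_discrete.aemeasurable
    refine measure_bool_ext ?_
    rw [map_measureReal_apply Measurable.of_discrete (by simp)]
    have : (fun b => !b) ⁻¹' {true} = ({false} : Set Bool) := by ext b; cases b <;> simp
    rw [this, bern_real_false (by norm_num) (by norm_num), bern_real_true (by norm_num) (by norm_num)]
    norm_num
  rw [h1, ← Measure.map_map hm hm2]
  unfold perc
  rw [Measure.map_infinitePi_infinitePi_of_inj (P := fun _ : V2 => bern (1 / 2))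
    (f := fun e => e + (1, 1)) (fun a b h => by simpa using h),
    Measure.infinitePi_map_pi (f := fun _ b => !b) _ (fun _ => Measurable.of_discrete), hb]

lemma crossing (ω : V2 → Bool) (n : ℕ) :
    (∃ j ∈ Finset.range (n + 1), ω ∈ ConnTo Set.univ {v | v.1 = n} (0, (j : ℤ))) ∨
    (∃ i ∈ Finset.range (n + 1), ω ∈ dual ⁻¹' ConnTo Set.univ {v | v.2 = -1} ((i : ℤ), (n : ℤ))) := by
  classical
  by_contra hcon
  push Not at hcon
  obtain ⟨h1, h2⟩ := hcon
  let A : Set V2 := {v | ∃ j ∈ Finset.range (n + 1), Conn ω Set.univ (0, (j : ℤ)) v}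
  let F : Set V2 := {v | ∃ i ∈ Finset.range (n + 1), Conn (dual ω) Set.univ ((i : ℤ), (n : ℤ)) v}
  have hA : ∀ x y : V2, y - x ∈ dirs → ω (x + y) = true → (x ∈ A ↔ y ∈ A) := by
    intro x y hd ho
    constructor
    · rintro ⟨j, hj, h⟩
      exact ⟨j, hj, h.tail ⟨trivial, trivial, hd, ho⟩⟩
    · rintro ⟨j, hj, h⟩
      exact ⟨j, hj, h.tail (Adj.symm ⟨trivial, trivial, hd, ho⟩)⟩
  have hF : ∀ x y : V2, y - x ∈ dirs → ω (x + y + (1, 1)) = false → (x ∈ F ↔ y ∈ F) := by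
    intro x y hd ho
    have ho : dual ω (x + y) = true := by simp [dual, ho]
    constructor
    · rintro ⟨j, hj, h⟩
      exact ⟨j, hj, h.tail ⟨trivial, trivial, hd, ho⟩⟩
    · rintro ⟨j, hj, h⟩
      exact ⟨j, hj, h.tail (Adj.symm ⟨trivial, trivial, hd, ho⟩)⟩
  refine no_crossing_pair n (fun i j => if ((i : ℤ), (j : ℤ)) ∈ A then 1 else 0)
    (fun i j => if ((i : ℤ), (j : ℤ) - 1) ∈ F then 1 else 0) ?_ ?_ ?_ ?_ ?_ ?_
  · intro i _ j _
    cases ho : ω ((i : ℤ) + (i + 1), (j : ℤ) + j)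
    · have := hF ((i : ℤ), (j : ℤ)) ((i : ℤ), (j : ℤ) - 1) (by rw [mem_dirs]; simp)
        (by rw [← ho]; congr 1; simp; ring_nf; simp)
      simp [this]
    · have := hA ((i : ℤ), (j : ℤ)) ((i : ℤ) + 1, (j : ℤ)) (by rw [mem_dirs]; simp) ho
      simp [this]
  · intro i _ j _
    cases ho : ω ((i : ℤ) + 1 + (i + 1), (j : ℤ) + (j + 1))
    · have := hF ((i : ℤ), (j : ℤ)) ((i : ℤ) + 1, (j : ℤ)) (by rw [mem_dirs]; simp)
        (by rw [← ho]; congr 1; simp; constructor <;> ring)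
      simp [this]
    · have := hA ((i : ℤ) + 1, (j : ℤ)) ((i : ℤ) + 1, (j : ℤ) + 1) (by rw [mem_dirs]; simp) ho
      simp [this]
  · intro j hj
    have : (0, (j : ℤ)) ∈ A := ⟨j, Finset.mem_range.2 (by omega), Relation.ReflTransGen.refl⟩
    simp [this]
  · intro j hj
    have : ((n : ℤ), (j : ℤ)) ∉ A := by
      rintro ⟨j', hj', h⟩
      exact h1 j' hj' ⟨_, rfl, h⟩
    simp [this]
  · intro i hi
    have : ((i : ℤ), (n : ℤ)) ∈ F := ⟨i, Finset.mem_range.2 (by omega), Relation.ReflTransGen.refl⟩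
    simp [this]
  · intro i hi
    have : ((i : ℤ), (-1 : ℤ)) ∉ F := by
      rintro ⟨j', hj', h⟩
      exact h2 j' hj' ⟨_, rfl, h⟩
    simp [this]

lemma arm_half_lower (m : ℕ) : 1 ≤ 2 * ((m : ℝ) + 2) * arm (1 / 2) m := by
  have hcov : (Set.univ : Set (V2 → Bool)) ⊆
      (⋃ j ∈ Finset.range (m + 1 + 1), ConnTo Set.univ {v | v.1 = ((m + 1 : ℕ) : ℤ)} (0, (j : ℤ))) ∪
      (⋃ i ∈ Finset.range (m + 1 + 1), dual ⁻¹' ConnTo Set.univ {v | v.2 = -1} ((i : ℤ), ((m + 1 : ℕ) : ℤ))) := by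
    intro ω _
    rcases crossing ω (m + 1) with ⟨j, hj, h⟩ | ⟨j, hj, h⟩
    · exact Or.inl (Set.mem_biUnion hj h)
    · exact Or.inr (Set.mem_biUnion hj h)
  have h1 : (1 : ℝ) ≤ (perc (1 / 2)).real Set.univ := by simp
  refine le_trans h1 ?_
  refine le_trans (measureReal_mono hcov) (le_trans (measureReal_union_le _ _) ?_)
  have ha : (perc (1 / 2)).real (⋃ j ∈ Finset.range (m + 1 + 1),
      ConnTo Set.univ {v | v.1 = ((m + 1 : ℕ) : ℤ)} (0, (j : ℤ))) ≤ ((m : ℝ) + 2) * arm (1 / 2) m := by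
    refine le_trans (measureReal_biUnion_finset_le _ _) ?_
    refine le_trans (Finset.sum_le_sum (g := fun _ => arm (1 / 2) m) fun j _ => ?_) ?_
    · refine arm_translate _ _ _ _ ?_
      intro b hb hb'
      simp only [box, Set.mem_ofPred_eq, Prod.fst_sub] at hb hb'
      push_cast at hb
      omega
    · simp; apply le_of_eq; ring
  have hb : (perc (1 / 2)).real (⋃ i ∈ Finset.range (m + 1 + 1),
      dual ⁻¹' ConnTo Set.univ {v | v.2 = -1} ((i : ℤ), ((m + 1 : ℕ) : ℤ))) ≤ ((m : ℝ) + 2) * arm (1 / 2) m := by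
    refine le_trans (measureReal_biUnion_finset_le _ _) ?_
    refine le_trans (Finset.sum_le_sum (g := fun _ => arm (1 / 2) m) fun j _ => ?_) ?_
    · rw [← map_measureReal_apply measurable_dual (measurableSet_connTo _ _ _), perc_dual]
      refine arm_translate _ _ _ _ ?_
      intro b hb hb'
      simp only [box, Set.mem_ofPred_eq, Prod.snd_sub] at hb hb'
      push_cast at hb'
      omega
    · simp; apply le_of_eq; ring
  linarith

lemma phi_half_ge_one (S : Finset V2) (h0 : (0 : V2) ∈ S) : 1 ≤ phi (1 / 2) S := by
  by_contra hlt
  push Not at hlt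
  have hphi0 : 0 ≤ phi (1 / 2) S := by
    unfold phi
    exact mul_nonneg (by norm_num) (Finset.sum_nonneg fun _ _ => Finset.sum_nonneg fun _ _ => measureReal_nonneg)
  obtain ⟨L, hL⟩ : ∃ L : ℕ, ∀ x ∈ S, x ∈ box L := by
    refine ⟨∑ x ∈ S, (x.1.natAbs + x.2.natAbs), fun x hx => ?_⟩
    have := Finset.single_le_sum (f := fun x : V2 => x.1.natAbs + x.2.natAbs) (fun _ _ => Nat.zero_le _) hx
    simp only [box, Set.mem_ofPred_eq] at *
    omega
  have hL1 : ∀ x ∈ S, x ∈ box (L + 1) := by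
    intro x hx; have := hL x hx
    simp only [box, Set.mem_ofPred_eq] at *; push_cast; omega
  have hL2 : ∀ x ∈ S, ∀ d ∈ dirs, x + d ∈ box (L + 1) := by
    intro x hx d hd
    refine box_add (hL x hx) ?_
    rw [mem_dirs] at hd
    simp only [box, Set.mem_ofPred_eq]; omega
  have hdecay : ∀ m : ℕ, arm (1 / 2) (m * (L + 1)) ≤ phi (1 / 2) S ^ m := by
    intro m
    induction m with
    | zero => simp [arm, measureReal_le_one]
    | succ m ih =>
      have := arm_step (p := 1 / 2) (by norm_num) (by norm_num) S h0 (L + 1) hL1 hL2 (m * (L + 1))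
      rw [Nat.succ_mul, pow_succ, mul_comm (_ ^ m)]
      exact le_trans this (mul_le_mul_of_nonneg_left ih hphi0)
  have hlim : Filter.Tendsto (fun m : ℕ => 2 * (((m : ℝ) * phi (1 / 2) S ^ m) * (L + 1) + 2 * phi (1 / 2) S ^ m))
      Filter.atTop (nhds (2 * (0 * ((L : ℝ) + 1) + 2 * 0))) := by
    have t1 := tendsto_self_mul_const_pow_of_lt_one hphi0 hlt
    have t2 := tendsto_pow_atTop_nhds_zero_of_lt_one hphi0 hlt
    exact ((t1.mul_const _).add (t2.const_mul _)).const_mul _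
  have hge : ∀ m : ℕ, 1 ≤ 2 * (((m : ℝ) * phi (1 / 2) S ^ m) * (L + 1) + 2 * phi (1 / 2) S ^ m) := by
    intro m
    have h1 := arm_half_lower (m * (L + 1))
    have h2 := hdecay m
    push_cast at h1
    have h3 : 2 * ((m : ℝ) * (L + 1) + 2) * arm (1 / 2) (m * (L + 1))
        ≤ 2 * ((m : ℝ) * (L + 1) + 2) * phi (1 / 2) S ^ m :=
      mul_le_mul_of_nonneg_left h2 (by positivity)
    linarith
  have := ge_of_tendsto' hlim hge
  norm_num at this

/-! ### Russo's formula -/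

/-- The event `A` after forcing the state of the bond `e`. -/
def force (e : V2) (b : Bool) (A : Set (V2 → Bool)) : Set (V2 → Bool) :=
  {ω | Function.update ω e b ∈ A}

/-- The event that `e` is pivotal for `A`. -/
def piv (e : V2) (A : Set (V2 → Bool)) : Set (V2 → Bool) := force e true A \ force e false A

/-- increasing events -/
def Incr (A : Set (V2 → Bool)) : Prop :=
  ∀ ω ω' : V2 → Bool, (∀ e, ω e = true → ω' e = true) → ω ∈ A → ω' ∈ A

lemma measurableSet_force {A : Set (V2 → Bool)} (hA : MeasurableSet A) (e : V2) (b : Bool) :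
    MeasurableSet (force e b A) := by
  have : Measurable (fun ω : V2 → Bool => Function.update ω e b) := by
    refine measurable_pi_lambda _ fun i => ?_
    by_cases h : i = e
    · subst h; simp
    · simp only [Function.update_of_ne h]; exact measurable_pi_apply i
  exact this hA

lemma measurableSet_piv {A : Set (V2 → Bool)} (hA : MeasurableSet A) (e : V2) :
    MeasurableSet (piv e A) := (measurableSet_force hA e true).diff (measurableSet_force hA e false)

lemma depOn_force {A : Set (V2 → Bool)} {F : Set V2} (hA : DepOn A F) (e : V2) (b : Bool) :
    DepOn (force e b A) (F \ {e}) := by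
  intro ω ω' h hω
  refine hA _ _ ?_ hω
  intro i hi
  by_cases hie : i = e
  · subst hie; simp
  · simp only [Function.update_of_ne hie]; exact h i ⟨hi, hie⟩

lemma incr_force {A : Set (V2 → Bool)} (hA : Incr A) (e : V2) (b : Bool) : Incr (force e b A) := by
  intro ω ω' h hω
  refine hA _ _ ?_ hω
  intro i
  by_cases hie : i = e
  · subst hie; simp
  · simp only [Function.update_of_ne hie]; exact h i

lemma force_split {p : ℝ} (h0 : 0 ≤ p) (h1 : p ≤ 1) {A : Set (V2 → Bool)} (hA : MeasurableSet A)
    (e : V2) : (perc p).real A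
      = p * (perc p).real (force e true A) + (1 - p) * (perc p).real (force e false A) := by
  have hdep : ∀ b, DepOn (force e b A) (Set.univ \ {e}) := fun b =>
    depOn_force (fun ω ω' h hω => by
      have : ω = ω' := funext fun i => h i trivial
      exact this ▸ hω) e b
  have hE := measurableSet_edge e
  have hdis : Disjoint ({e} : Set V2) (Set.univ \ {e}) := Set.disjoint_left.2 fun i hi h => h.2 hi
  have hdepc : DepOn {ω : V2 → Bool | ω e = true}ᶜ {e} := by
    intro ω ω' g hω h'
    have := g e rfl
    exact hω (this.trans h')
  have e1 : A ∩ {ω | ω e = true} = {ω | ω e = true} ∩ force e true A := by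
    ext ω
    simp only [Set.mem_inter_iff, Set.mem_ofPred_eq, force]
    constructor
    · rintro ⟨h, h'⟩
      refine ⟨h', ?_⟩
      rw [← h', Function.update_eq_self]; exact h
    · rintro ⟨h', h⟩
      rw [← h', Function.update_eq_self] at h
      exact ⟨h, h'⟩
  have e2 : A \ {ω | ω e = true} = {ω | ω e = true}ᶜ ∩ force e false A := by
    ext ω
    simp only [Set.mem_inter_iff, Set.mem_sdiff, Set.mem_compl_iff, Set.mem_ofPred_eq, force, Bool.not_eq_true]
    constructor
    · rintro ⟨h, h'⟩
      refine ⟨h', ?_⟩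
      rw [← h', Function.update_eq_self]; exact h
    · rintro ⟨h', h⟩
      rw [← h', Function.update_eq_self] at h
      exact ⟨h, h'⟩
  rw [← measureReal_inter_add_sdiff (s := A) hE, e1, e2,
    perc_indep p hE (measurableSet_force hA e true) (depOn_edge e) (hdep true) hdis,
    perc_indep p hE.compl (measurableSet_force hA e false) hdepc (hdep false) hdis,
    probReal_compl_eq_one_sub hE, perc_edge h0 h1]

lemma force_piv {A : Set (V2 → Bool)} {e e' : V2} (h : e' ≠ e) (b : Bool) :
    force e b (piv e' A) = piv e' (force e b A) := by
  ext ω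
  simp only [piv, force, Set.mem_sdiff, Set.mem_ofPred_eq]
  rw [Function.update_comm h, Function.update_comm h]

lemma piv_real (p : ℝ) {A : Set (V2 → Bool)} (hA : MeasurableSet A) (hi : Incr A) (e : V2) :
    (perc p).real (piv e A) = (perc p).real (force e true A) - (perc p).real (force e false A) := by
  refine measureReal_sdiff ?_ (measurableSet_force hA e false)
  intro ω hω
  refine hi _ _ ?_ hω
  intro i
  by_cases hie : i = e
  · subst hie; simp
  · simp only [Function.update_of_ne hie]; exact id

lemma russo (F : Finset V2) : ∀ A : Set (V2 → Bool), MeasurableSet A → Incr A → DepOn A (F : Set V2) →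
    ∀ p ∈ Set.Ioo (0 : ℝ) 1,
    HasDerivAt (fun p => (perc p).real A) (∑ e ∈ F, (perc p).real (piv e A)) p := by
  classical
  induction F using Finset.induction_on with
  | empty =>
    intro A _ _ hd p _
    by_cases hne : ∃ ω, ω ∈ A
    · obtain ⟨ω, hω⟩ := hne
      have : A = Set.univ := Set.eq_univ_of_forall fun ω' => hd ω ω' (by simp) hω
      subst this
      simpa using hasDerivAt_const p (1 : ℝ)
    · have : A = ∅ := Set.eq_empty_of_forall_notMem fun ω h => hne ⟨ω, h⟩
      subst this
      simpa using hasDerivAt_const p (0 : ℝ)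
  | insert e F he ih =>
    intro A hA hi hd p hp
    have hdF : ∀ b, DepOn (force e b A) (F : Set V2) := fun b =>
      depOn_mono (depOn_force hd e b) (by
        intro x hx
        simp only [Finset.coe_insert, Set.mem_sdiff, Set.mem_insert_iff, Set.mem_singleton_iff] at hx
        tauto)
    have i1 := ih _ (measurableSet_force hA e true) (incr_force hi e true) (hdF true) p hp
    have i2 := ih _ (measurableSet_force hA e false) (incr_force hi e false) (hdF false) p hp
    have hd1 := ((hasDerivAt_id p).mul i1).add (((hasDerivAt_id p).const_sub 1).mul i2)
    have heq : (fun p => (perc p).real A) =ᶠ[nhds p] (fun p =>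
        p * (perc p).real (force e true A) + (1 - p) * (perc p).real (force e false A)) := by
      filter_upwards [isOpen_Ioo.mem_nhds hp] with r hr
      exact force_split hr.1.le hr.2.le hA e
    refine HasDerivAt.congr_of_eventuallyEq ?_ heq
    refine HasDerivAt.congr_deriv (f := fun p => p * (perc p).real (force e true A)
      + (1 - p) * (perc p).real (force e false A)) hd1 ?_
    rw [Finset.sum_insert he, piv_real p hA hi e]
    have : ∑ x ∈ F, (perc p).real (piv x A) = ∑ x ∈ F, (p * (perc p).real (piv x (force e true A))
        + (1 - p) * (perc p).real (piv x (force e false A))) := by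
      refine Finset.sum_congr rfl fun x hx => ?_
      have hne : x ≠ e := fun h => he (h ▸ hx)
      rw [force_split hp.1.le hp.2.le (measurableSet_piv hA x) e, force_piv hne, force_piv hne]
    rw [this, Finset.sum_add_distrib, ← Finset.mul_sum, ← Finset.mul_sum]
    simp only [id]
    ring

lemma perc_mono (F : Finset V2) {A : Set (V2 → Bool)} (hA : MeasurableSet A) (hi : Incr A)
    (hd : DepOn A (F : Set V2)) {p p' : ℝ} (h0 : 0 < p) (h : p ≤ p') (h1 : p' < 1) :
    (perc p).real A ≤ (perc p').real A := by
  have hder := russo F A hA hi hd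
  have hm : MonotoneOn (fun p => (perc p).real A) (Set.Ioo (0 : ℝ) 1) := by
    refine monotoneOn_of_deriv_nonneg (convex_Ioo 0 1)
      (fun x hx => (hder x hx).continuousAt.continuousWithinAt) ?_ ?_
    · rw [interior_Ioo]
      exact fun x hx => (hder x hx).differentiableAt.differentiableWithinAt
    · rw [interior_Ioo]
      intro x hx
      rw [(hder x hx).deriv]
      exact Finset.sum_nonneg fun _ _ => measureReal_nonneg
  exact hm ⟨h0, lt_of_le_of_lt h h1⟩ ⟨lt_of_lt_of_le h0 h, h1⟩ h

/-! ### The differential inequality -/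

lemma incr_conn (D : Set V2) (x y : V2) : Incr {ω | Conn ω D x y} :=
  fun _ _ h hω => Conn.congr (fun e _ => h e) hω

lemma incr_connTo (D B : Set V2) (x : V2) : Incr (ConnTo D B x) := by
  rintro ω ω' h ⟨b, hb, hc⟩
  exact ⟨b, hb, incr_conn D x b ω ω' h hc⟩

/-- finite set containing all bonds inside `D` -/
def edgeFin (D : Finset V2) : Finset V2 := (D ×ˢ dirs).image (fun z => z.1 + (z.1 + z.2))

lemma edgesIn_sub (D : Finset V2) : edgesIn (D : Set V2) ⊆ (edgeFin D : Set V2) := by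
  rintro e ⟨x, hx, y, hy, hd, rfl⟩
  simp only [edgeFin, Finset.coe_image, Set.mem_image]
  exact ⟨(x, y - x), by simpa using ⟨hx, hd⟩, by simp⟩

/-- The set of points of `D` not connected to `B` is exactly `S`. -/
def scr (D S : Finset V2) (B : Set V2) : Set (V2 → Bool) :=
  {ω | ∀ x ∈ D, (x ∈ S ↔ ω ∉ ConnTo (D : Set V2) B x)}

lemma measurableSet_scr (D S : Finset V2) (B : Set V2) : MeasurableSet (scr D S B) := by
  have : scr D S B = ⋂ x : V2, ⋂ _ : x ∈ D, {ω | x ∈ S ↔ ω ∉ ConnTo (D : Set V2) B x} := by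
    ext ω; simp [scr]
  rw [this]
  refine MeasurableSet.iInter fun x => MeasurableSet.iInter fun _ => ?_
  by_cases hx : x ∈ S
  · simp only [hx, true_iff]; exact (measurableSet_connTo _ _ _).compl
  · simp only [hx, false_iff, not_not]; exact measurableSet_connTo _ _ _

lemma not_edgesIn {S : Set V2} {x y : V2} (hd : y - x ∈ dirs) (h : x ∉ S ∨ y ∉ S) : x + y ∉ edgesIn S := by
  rintro ⟨a, ha, b, hb, hab, he⟩
  rcases edge_inj hd hab he with ⟨rfl, rfl⟩ | ⟨rfl, rfl⟩ <;> tauto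

lemma depOn_scr (D S : Finset V2) (B : Set V2) :
    DepOn (scr D S B) (edgesIn (D : Set V2) \ edgesIn (S : Set V2)) := by
  intro ω ω' h hω x hx
  rw [hω x hx]
  have key1 : ∀ b ∈ B, ∀ x, Conn ω (D : Set V2) x b → Conn ω' (D : Set V2) x b := by
    intro b hb x hc
    induction hc using Relation.ReflTransGen.head_induction_on with
    | refl => exact Relation.ReflTransGen.refl
    | head g g' ih =>
      rename_i a c
      refine Relation.ReflTransGen.head ⟨g.1, g.2.1, g.2.2.1, ?_⟩ ih
      have hcS : c ∉ S := fun hcS => (hω c g.2.1).1 hcS ⟨b, hb, g'⟩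
      rw [← h _ ⟨⟨a, g.1, c, g.2.1, g.2.2.1, rfl⟩, not_edgesIn g.2.2.1 (Or.inr hcS)⟩]
      exact g.2.2.2
  have key2 : ∀ b ∈ B, ∀ x, Conn ω' (D : Set V2) x b → Conn ω (D : Set V2) x b := by
    intro b hb x hc
    induction hc using Relation.ReflTransGen.head_induction_on with
    | refl => exact Relation.ReflTransGen.refl
    | head g g' ih =>
      rename_i a c
      refine Relation.ReflTransGen.head ⟨g.1, g.2.1, g.2.2.1, ?_⟩ ih
      have hcS : c ∉ S := fun hcS => (hω c g.2.1).1 hcS ⟨b, hb, ih⟩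
      rw [h _ ⟨⟨a, g.1, c, g.2.1, g.2.2.1, rfl⟩, not_edgesIn g.2.2.1 (Or.inr hcS)⟩]
      exact g.2.2.2
  refine not_congr ⟨?_, ?_⟩
  · rintro ⟨b, hb, hc⟩
    exact ⟨b, hb, key1 b hb x hc⟩
  · rintro ⟨b, hb, hc⟩
    exact ⟨b, hb, key2 b hb x hc⟩

/-- boundary pairs -/
def bdry (S : Finset V2) : Finset (V2 × V2) := (S ×ˢ dirs).filter (fun z => z.1 + z.2 ∉ S)

lemma sum_bdry (S : Finset V2) (g : V2 → ℝ) :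
    ∑ z ∈ bdry S, g z.1 = ∑ x ∈ S, ∑ _d ∈ dirs.filter (fun d => x + d ∉ S), g x := by
  rw [bdry, Finset.sum_filter, Finset.sum_product]
  refine Finset.sum_congr rfl fun x _ => ?_
  rw [Finset.sum_filter]

lemma dct (D : Finset V2) (B : Set V2) (hD0 : (0 : V2) ∈ D)
    (hB : ∀ x ∈ D, x ∉ B → ∀ d ∈ dirs, x + d ∈ D) {p : ℝ} (hp : 1 / 2 ≤ p) (hp1 : p < 1) :
    1 - (perc p).real (ConnTo (D : Set V2) B 0)
      ≤ ∑ e ∈ edgeFin D, (perc p).real (piv e (ConnTo (D : Set V2) B 0)) := by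
  classical
  set A := ConnTo (D : Set V2) B 0 with hAdef
  have hA : MeasurableSet A := measurableSet_connTo _ _ _
  have hi : Incr A := incr_connTo _ _ _
  let PS : Finset (Finset V2) := D.powerset.filter (fun S => (0 : V2) ∈ S)
  have hPS : ∀ S, S ∈ PS ↔ S ⊆ D ∧ (0 : V2) ∈ S := by intro S; simp [PS]
  -- covering
  have hcov : 1 - (perc p).real A ≤ ∑ S ∈ PS, (perc p).real (scr D S B) := by
    rw [← probReal_compl_eq_one_sub hA]
    refine le_trans (measureReal_mono ?_ (measure_ne_top _ _)) (measureReal_biUnion_finset_le PS _)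
    intro ω hω
    simp only [Set.mem_iUnion]
    refine ⟨D.filter (fun x => ω ∉ ConnTo (D : Set V2) B x), ?_, ?_⟩
    · rw [hPS]
      exact ⟨Finset.filter_subset _ _, by simp only [Finset.mem_filter]; exact ⟨hD0, hω⟩⟩
    · intro x hx
      simp [hx]
  -- each term
  have hterm : ∀ S ∈ PS, (perc p).real (scr D S B)
      ≤ ∑ e ∈ edgeFin D, (perc p).real (piv e A ∩ scr D S B) := by
    intro S hS
    obtain ⟨hSD, h0S⟩ := (hPS S).1 hS
    by_cases hSB : ∃ x ∈ S, x ∈ B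
    · obtain ⟨x, hxS, hxB⟩ := hSB
      have : scr D S B = ∅ := by
        refine Set.eq_empty_of_forall_notMem fun ω hω => ?_
        exact (hω x (hSD hxS)).1 hxS ⟨x, hxB, Relation.ReflTransGen.refl⟩
      rw [this]
      simp
    push Not at hSB
    have hinj : Set.InjOn (fun z : V2 × V2 => z.1 + (z.1 + z.2)) (bdry S : Set (V2 × V2)) := by
      rintro ⟨x, d⟩ hx ⟨y, d'⟩ hy hxy
      simp only [bdry, Finset.coe_filter, Finset.mem_product, Set.mem_ofPred_eq] at hx hy
      rcases edge_inj (x := x) (y := x + d) (a := y) (b := y + d') (by simpa using hx.1.2)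
        (by simpa using hy.1.2) hxy with ⟨h1, h2⟩ | ⟨h1, h2⟩
      · subst h1
        simpa using h2
      · exact absurd (h1 ▸ hx.1.1) hy.2
    have hsub : (bdry S).image (fun z : V2 × V2 => z.1 + (z.1 + z.2)) ⊆ edgeFin D := by
      refine Finset.image_subset_image ?_
      intro z hz
      simp only [bdry, Finset.mem_filter, Finset.mem_product] at hz
      exact Finset.mem_product.2 ⟨hSD hz.1.1, hz.1.2⟩
    have hge : 1 ≤ ∑ z ∈ bdry S, (perc p).real {ω | Conn ω (S : Set V2) 0 z.1} := by
      have hphi := phi_half_ge_one S h0S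
      unfold phi at hphi
      rw [← sum_bdry S (fun x => (perc (1 / 2)).real {ω | Conn ω (S : Set V2) 0 x})] at hphi
      have : ∑ z ∈ bdry S, (perc (1 / 2)).real {ω | Conn ω (S : Set V2) 0 z.1}
          ≤ ∑ z ∈ bdry S, (perc p).real {ω | Conn ω (S : Set V2) 0 z.1} := by
        refine Finset.sum_le_sum fun z _ => ?_
        exact perc_mono (edgeFin S) (measurableSet_conn _ _ _) (incr_conn _ _ _)
          (depOn_mono (depOn_conn _ _ _) (edgesIn_sub S)) (by norm_num) hp hp1
      linarith
    calc (perc p).real (scr D S B)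
        ≤ (perc p).real (scr D S B) * ∑ z ∈ bdry S, (perc p).real {ω | Conn ω (S : Set V2) 0 z.1} :=
          le_mul_of_one_le_right measureReal_nonneg hge
      _ = ∑ z ∈ bdry S, (perc p).real (scr D S B ∩ {ω | Conn ω (S : Set V2) 0 z.1}) := by
          rw [Finset.mul_sum]
          refine Finset.sum_congr rfl fun z _ => ?_
          rw [perc_indep p (measurableSet_scr D S B) (measurableSet_conn _ _ _) (depOn_scr D S B)
            (depOn_conn _ _ _) (Set.disjoint_left.2 fun e he h => he.2 h)]
      _ ≤ ∑ z ∈ bdry S, (perc p).real (piv (z.1 + (z.1 + z.2)) A ∩ scr D S B) := by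
          refine Finset.sum_le_sum fun z hz => measureReal_mono ?_ (measure_ne_top _ _)
          obtain ⟨x, d⟩ := z
          simp only [bdry, Finset.mem_filter, Finset.mem_product] at hz
          rintro ω ⟨hω, hc⟩
          have hxD := hSD hz.1.1
          have hyD : x + d ∈ D := hB x hxD (hSB x hz.1.1) d hz.1.2
          refine ⟨⟨?_, ?_⟩, hω⟩
          · have hy : ω ∈ ConnTo (D : Set V2) B (x + d) := by
              by_contra hcon
              exact hz.2 ((hω _ hyD).2 hcon)
            have hle : ∀ i, ω i = true → Function.update ω (x + (x + d)) true i = true := by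
              intro i
              by_cases hie : i = x + (x + d)
              · subst hie; simp
              · simp only [Function.update_of_ne hie]; exact id
            obtain ⟨b, hb, hyb⟩ := incr_connTo _ _ _ _ _ hle hy
            refine ⟨b, hb, ?_⟩
            have c1 : Conn (Function.update ω (x + (x + d)) true) (D : Set V2) 0 x :=
              Conn.mono (Finset.coe_subset.2 hSD) (incr_conn _ _ _ _ _ hle hc)
            exact (c1.tail ⟨hxD, hyD, by simpa using hz.1.2, by simp⟩).trans hyb
          · intro hcon
            have : ω ∈ A := by
              refine hi _ _ ?_ hcon
              intro i
              by_cases hie : i = x + (x + d)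
              · subst hie; simp
              · simp only [Function.update_of_ne hie]; exact id
            exact (hω 0 hD0).1 h0S this
      _ = ∑ e ∈ (bdry S).image (fun z : V2 × V2 => z.1 + (z.1 + z.2)),
            (perc p).real (piv e A ∩ scr D S B) := by rw [Finset.sum_image hinj]
      _ ≤ _ := Finset.sum_le_sum_of_subset_of_nonneg hsub fun _ _ _ => measureReal_nonneg
  calc 1 - (perc p).real A ≤ _ := hcov
    _ ≤ ∑ S ∈ PS, ∑ e ∈ edgeFin D, (perc p).real (piv e A ∩ scr D S B) := Finset.sum_le_sum hterm
    _ = ∑ e ∈ edgeFin D, ∑ S ∈ PS, (perc p).real (piv e A ∩ scr D S B) := Finset.sum_comm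
    _ ≤ _ := by
      refine Finset.sum_le_sum fun e _ => ?_
      rw [← measureReal_biUnion_finset]
      · refine measureReal_mono ?_ (measure_ne_top _ _)
        intro ω hω
        simp only [Set.mem_iUnion] at hω
        obtain ⟨S, _, h⟩ := hω
        exact h.1
      · intro S hS S' hS' hne
        refine Set.disjoint_left.2 fun ω h1 h2 => hne ?_
        have hS := ((hPS S).1 hS).1
        have hS' := ((hPS S').1 hS').1
        ext y
        constructor
        · intro hy
          exact (h2.2 y (hS hy)).2 ((h1.2 y (hS hy)).1 hy)
        · intro hy
          exact (h1.2 y (hS' hy)).2 ((h2.2 y (hS' hy)).1 hy)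
      · intro S _
        exact (measurableSet_piv hA e).inter (measurableSet_scr D S B)

lemma box_finite (n : ℕ) : (box n).Finite := by
  refine Set.Finite.subset (Set.finite_Icc ((-(n : ℤ), -(n : ℤ)) : V2) ((n : ℤ), (n : ℤ))) ?_
  intro v hv
  simp only [box, Set.mem_ofPred_eq] at hv
  exact ⟨⟨hv.1, hv.2.2.1⟩, ⟨hv.2.1, hv.2.2.2⟩⟩

lemma arm_lower {p : ℝ} (hp : 1 / 2 ≤ p) (hp1 : p < 1) (n : ℕ) :
    1 - Real.exp (1 / 2 - p) ≤ arm p n := by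
  classical
  let D : Finset V2 := (box_finite (n + 1)).toFinset
  have hD : ∀ x, x ∈ D ↔ x ∈ box (n + 1) := by intro x; simp [D]
  let A := ConnTo (D : Set V2) (box n)ᶜ 0
  have hA : MeasurableSet A := measurableSet_connTo _ _ _
  have hder := russo (edgeFin D) A hA (incr_connTo _ _ _)
    (depOn_mono (depOn_connTo _ _ _) (edgesIn_sub D))
  have hD0 : (0 : V2) ∈ D := by rw [hD]; simp [box]; omega
  have hBD : ∀ x ∈ D, x ∉ (box n)ᶜ → ∀ d ∈ dirs, x + d ∈ D := by
    intro x _ hx d hd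
    rw [hD]
    refine box_add (not_not.1 hx) ?_
    rw [mem_dirs] at hd
    simp only [box, Set.mem_ofPred_eq]; omega
  have hg : ∀ r ∈ Set.Ioo (0 : ℝ) 1, HasDerivAt (fun r => (1 - (perc r).real A) * Real.exp r)
      ((-(∑ e ∈ edgeFin D, (perc r).real (piv e A))) * Real.exp r
        + (1 - (perc r).real A) * Real.exp r) r := fun r hr =>
    ((hder r hr).const_sub 1).mul (Real.hasDerivAt_exp r)
  have hIcc : ∀ r ∈ Set.Icc (1 / 2) p, r ∈ Set.Ioo (0 : ℝ) 1 := fun r hr =>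
    ⟨by linarith [hr.1], by linarith [hr.2]⟩
  have hanti : AntitoneOn (fun r => (1 - (perc r).real A) * Real.exp r) (Set.Icc (1 / 2) p) := by
    refine antitoneOn_of_deriv_nonpos (convex_Icc _ _)
      (fun r hr => (hg r (hIcc r hr)).continuousAt.continuousWithinAt) ?_ ?_
    · exact fun r hr => (hg r (hIcc r (interior_subset hr))).differentiableAt.differentiableWithinAt
    · intro r hr
      have hr := interior_subset hr
      rw [(hg r (hIcc r hr)).deriv]
      have := dct D (box n)ᶜ hD0 hBD hr.1 (lt_of_le_of_lt hr.2 hp1)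
      have he := Real.exp_pos r
      nlinarith
  have h1 := hanti ⟨le_rfl, hp⟩ ⟨hp, le_rfl⟩ hp
  simp only at h1
  have h2 : (perc p).real A ≤ arm p n := by
    refine measureReal_mono ?_ (measure_ne_top _ _)
    rintro ω ⟨b, hb, hc⟩
    exact ⟨b, hb, hc.mono (Set.subset_univ _)⟩
  have h3 : (1 - (perc p).real A) * Real.exp p ≤ Real.exp (1 / 2) := by
    refine le_trans h1 ?_
    have : 0 ≤ (perc (1 / 2)).real A := measureReal_nonneg
    have he := Real.exp_pos (1 / 2)
    nlinarith
  have h4 : 1 - (perc p).real A ≤ Real.exp (1 / 2 - p) := by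
    rw [Real.exp_sub, le_div_iff₀ (Real.exp_pos p)]
    exact h3
  linarith

lemma perc_infinite {p : ℝ} (hp : 1 / 2 < p) (hp1 : p < 1) :
    ∃ E : Set (V2 → Bool), MeasurableSet E ∧ 0 < perc p E ∧
      ∀ ω ∈ E, {v | Conn ω Set.univ 0 v}.Infinite := by
  have hc : 0 < 1 - Real.exp (1 / 2 - p) := by
    have : Real.exp (1 / 2 - p) < 1 := Real.exp_lt_one_iff.2 (by linarith)
    linarith
  have hanti : Antitone (fun n : ℕ => ConnTo Set.univ (box n)ᶜ 0) := by
    intro n m hnm ω hω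
    obtain ⟨b, hb, hcb⟩ := hω
    refine ⟨b, fun h => hb ?_, hcb⟩
    simp only [box, Set.mem_ofPred_eq] at h ⊢
    omega
  have hlim := tendsto_measure_iInter_atTop (μ := perc p) (s := fun n : ℕ => ConnTo Set.univ (box n)ᶜ 0)
    (fun n => (measurableSet_connTo _ _ _).nullMeasurableSet) hanti ⟨0, measure_ne_top _ _⟩
  have hge : ENNReal.ofReal (1 - Real.exp (1 / 2 - p)) ≤ perc p (⋂ n : ℕ, ConnTo Set.univ (box n)ᶜ 0) := by
    refine ge_of_tendsto' hlim fun n => ?_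
    refine ENNReal.ofReal_le_of_le_toReal ?_
    exact arm_lower hp.le hp1 n
  refine ⟨_, MeasurableSet.iInter fun n => measurableSet_connTo _ _ _,
    lt_of_lt_of_le (ENNReal.ofReal_pos.2 hc) hge, ?_⟩
  intro ω hω hfin
  simp only [Set.mem_iInter] at hω
  let F := hfin.toFinset
  obtain ⟨b, hb, hcb⟩ := hω (∑ x ∈ F, (x.1.natAbs + x.2.natAbs))
  apply hb
  have hbF : b ∈ F := by simpa [F] using hcb
  have := Finset.single_le_sum (f := fun x : V2 => x.1.natAbs + x.2.natAbs) (fun _ _ => Nat.zero_le _) hbF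
  simp only [box, Set.mem_ofPred_eq] at *
  omega

/-! ### Coupling of the slab with the square lattice -/

/-- index set of the bits attached to one bond of the square lattice -/
abbrev Kap (k : ℕ) : Type := Fin (k + 1) ⊕ (Fin k ⊕ Fin k)

/-- base index set -/
abbrev BaseIdx (k : ℕ) : Type := (EdgeIdx × Fin 4) ⊕ (V2 × Kap k)

/-- densities of the base bits -/
def baseP (k : ℕ) (p t : ℝ) : BaseIdx k → ℝ
  | Sum.inl x => if x.1.2 = 2 then t else p
  | Sum.inr x => Sum.elim (fun _ => p) (fun _ => t) x.2

/-- The bits used by a horizontal bond based at `v`. -/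
def bitsH (k : ℕ) (a b : ℤ) : Kap k → EdgeIdx × Fin 4
  | Sum.inl l => (((a, b, (l : ℤ)), 0), 0)
  | Sum.inr (Sum.inl l) => (((a, b, (l : ℤ)), 2), 0)
  | Sum.inr (Sum.inr l) => (((a + 1, b, (l : ℤ)), 2), 1)

/-- The bits used by a vertical (in the plane) bond based at `v`. -/
def bitsV (k : ℕ) (a b : ℤ) : Kap k → EdgeIdx × Fin 4
  | Sum.inl l => (((a, b, (l : ℤ)), 1), 0)
  | Sum.inr (Sum.inl l) => (((a, b, (l : ℤ)), 2), 2)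
  | Sum.inr (Sum.inr l) => (((a, b + 1, (l : ℤ)), 2), 3)

/-- The bits used by the bond `m` of the square lattice. -/
def bits (k : ℕ) (z : V2 × Kap k) : BaseIdx k :=
  if z.1.1 % 2 = 1 ∧ z.1.2 % 2 = 0 then Sum.inl (bitsH k (z.1.1 / 2) (z.1.2 / 2) z.2)
  else if z.1.1 % 2 = 0 ∧ z.1.2 % 2 = 1 then Sum.inl (bitsV k (z.1.1 / 2) (z.1.2 / 2) z.2)
  else Sum.inr z

lemma bitsH_inj (k : ℕ) {a b a' b' : ℤ} {j j' : Kap k} (h : bitsH k a b j = bitsH k a' b' j') :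
    a = a' ∧ b = b' ∧ j = j' := by
  rcases j with j | j | j <;> rcases j' with j' | j' | j' <;>
    simp [bitsH, Fin.ext_iff] at h ⊢ <;> omega

lemma bitsV_inj (k : ℕ) {a b a' b' : ℤ} {j j' : Kap k} (h : bitsV k a b j = bitsV k a' b' j') :
    a = a' ∧ b = b' ∧ j = j' := by
  rcases j with j | j | j <;> rcases j' with j' | j' | j' <;>
    simp [bitsV, Fin.ext_iff] at h ⊢ <;> omega

lemma bitsHV (k : ℕ) {a b a' b' : ℤ} {j j' : Kap k} : bitsH k a b j ≠ bitsV k a' b' j' := by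
  rcases j with j | j | j <;> rcases j' with j' | j' | j' <;>
    simp [bitsV, bitsH]

lemma bits_inj (k : ℕ) : Function.Injective (bits k) := by
  rintro ⟨⟨x, y⟩, j⟩ ⟨⟨x', y'⟩, j'⟩ h
  unfold bits at h
  simp only at h
  split_ifs at h with h1 h2 h3 h4 h5 h6 h7
  · obtain ⟨e1, e2, e3⟩ := bitsH_inj k (Sum.inl.inj h)
    have : x = x' := by omega
    have : y = y' := by omega
    simp [*]
  · exact absurd (Sum.inl.inj h) (bitsHV k)
  · exact absurd (Sum.inl.inj h).symm (bitsHV k)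
  · obtain ⟨e1, e2, e3⟩ := bitsV_inj k (Sum.inl.inj h)
    have : x = x' := by omega
    have : y = y' := by omega
    simp [*]
  · exact Sum.inr.inj h

lemma baseP_bits (k : ℕ) (p t : ℝ) (m : V2) (j : Kap k) :
    baseP k p t (bits k (m, j)) = Sum.elim (fun _ => p) (fun _ => t) j := by
  unfold bits
  split_ifs <;> rcases j with j | j | j <;> simp [baseP, bitsH, bitsV]

/-- base measure -/
noncomputable def baseM (k : ℕ) (p t : ℝ) : Measure (BaseIdx k → Bool) :=
  Measure.infinitePi (fun i => bern (baseP k p t i))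

instance (k : ℕ) (p t : ℝ) : IsProbabilityMeasure (baseM k p t) := by unfold baseM; infer_instance

/-- local rule for the square lattice bonds -/
def gX (k : ℕ) (b : Kap k → Bool) : Bool :=
  decide ((∃ j, b (Sum.inl j) = true) ∧ ∀ j, b (Sum.inr j) = true)

/-- local rule for the slab bonds -/
def gY (e : EdgeIdx) (b : Fin 4 → Bool) : Bool :=
  if e.2 = 2 then decide (∃ i, b i = true) else b 0

def cfgX (k : ℕ) (ω : BaseIdx k → Bool) : V2 → Bool := fun m => gX k (fun j => ω (bits k (m, j)))

def cfgY (k : ℕ) (ω : BaseIdx k → Bool) : Config := fun e => gY e (fun i => ω (Sum.inl (e, i)))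

lemma gX_law (k : ℕ) {p t : ℝ} (hp0 : 0 ≤ p) (hp1 : p ≤ 1) (ht0 : 0 ≤ t) (ht1 : t ≤ 1) :
    (Measure.infinitePi (fun j : Kap k => bern (Sum.elim (fun _ => p) (fun _ => t) j))).map (gX k)
      = bern ((1 - (1 - p) ^ (k + 1)) * t ^ (2 * k)) := by
  have hmg : Measurable (gX k) := Measurable.of_discrete
  have : IsProbabilityMeasure ((Measure.infinitePi
      (fun j : Kap k => bern (Sum.elim (fun _ => p) (fun _ => t) j))).map (gX k)) :=
    Measure.isProbabilityMeasure_map hmg.aemeasurable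
  have hq0 : (1 - p) ^ (k + 1) ≤ 1 := pow_le_one₀ (by linarith) (by linarith)
  have hq1 : 0 ≤ (1 - p) ^ (k + 1) := pow_nonneg (by linarith) _
  have ht2 : t ^ (2 * k) ≤ 1 := pow_le_one₀ ht0 ht1
  have ht3 : 0 ≤ t ^ (2 * k) := pow_nonneg ht0 _
  refine measure_bool_ext ?_
  rw [bern_real_true (by nlinarith) (by nlinarith), map_measureReal_apply hmg (by simp)]
  let A : Set (Kap k → Bool) := Set.pi (Finset.univ : Finset (Kap k)) (Sum.elim (fun _ => Set.univ) (fun _ => {true}))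
  let B : Set (Kap k → Bool) := Set.pi (Finset.univ : Finset (Kap k)) (Sum.elim (fun _ => {false}) (fun _ => {true}))
  have hset : gX k ⁻¹' {true} = A \ B := by
    ext b
    simp only [gX, Set.mem_preimage, Set.mem_singleton_iff, decide_eq_true_eq, Set.mem_sdiff, A, B,
      Set.mem_pi, Finset.mem_coe, Finset.mem_univ, Sum.forall, Sum.elim_inl, Sum.elim_inr,
      Set.mem_univ, forall_const]
    constructor
    · rintro ⟨⟨j, hj⟩, h2⟩
      refine ⟨⟨trivial, h2⟩, fun h => ?_⟩
      have := h.1 j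
      simp_all
    · rintro ⟨⟨_, h2, h3⟩, h⟩
      refine ⟨?_, ?_⟩
      · by_contra hcon
        push Not at hcon
        exact h ⟨fun i => by simpa using hcon i, h2, h3⟩
      · exact ⟨h2, h3⟩
  have hBA : B ⊆ A := by
    intro b hb i hi
    have := hb i hi
    rcases i with i | i
    · trivial
    · exact this
  have hB : MeasurableSet B := Set.Finite.measurableSet (Set.toFinite _)
  rw [hset, measureReal_sdiff hBA hB]
  have hA1 : (Measure.infinitePi
      (fun j : Kap k => bern (Sum.elim (fun _ => p) (fun _ => t) j))).real A = t ^ (2 * k) := by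
    rw [measureReal_def, Measure.infinitePi_pi _ (fun _ _ => Set.Finite.measurableSet (Set.toFinite _)), ENNReal.toReal_prod]
    simp only [Fintype.prod_sum_type, Sum.elim_inl, Sum.elim_inr, ← measureReal_def, bern_real_true ht0 ht1,
      probReal_univ]
    simp
    ring
  have hB1 : (Measure.infinitePi
      (fun j : Kap k => bern (Sum.elim (fun _ => p) (fun _ => t) j))).real B = (1 - p) ^ (k + 1) * t ^ (2 * k) := by
    rw [measureReal_def, Measure.infinitePi_pi _ (fun _ _ => Set.Finite.measurableSet (Set.toFinite _)), ENNReal.toReal_prod]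
    simp only [Fintype.prod_sum_type, Sum.elim_inl, Sum.elim_inr, ← measureReal_def, bern_real_true ht0 ht1,
      bern_real_false hp0 hp1, Finset.prod_const, Finset.card_univ, Fintype.card_sum, Fintype.card_fin]
    ring
  rw [hA1, hB1]
  ring

lemma cfgX_law (k : ℕ) {p t : ℝ} (hp0 : 0 ≤ p) (hp1 : p ≤ 1) (ht0 : 0 ≤ t) (ht1 : t ≤ 1) :
    (baseM k p t).map (cfgX k) = perc ((1 - (1 - p) ^ (k + 1)) * t ^ (2 * k)) := by
  have := block_law (fun i => bern (baseP k p t i)) (bits k) (bits_inj k) (fun _ => gX k)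
    (fun _ => Measurable.of_discrete)
  simp only [baseP_bits, gX_law k hp0 hp1 ht0 ht1] at this
  exact this

lemma gY_law (k : ℕ) {p t : ℝ} (hp0 : 0 ≤ p) (hp1 : p ≤ 1) (ht0 : 0 ≤ t) (ht1 : t ≤ 1) (e : EdgeIdx) :
    (Measure.infinitePi (fun i : Fin 4 => bern (baseP k p t (Sum.inl (e, i))))).map (gY e)
      = bern (if e.2 = 2 then 1 - (1 - t) ^ 4 else p) := by
  have hmg : Measurable (gY e) := Measurable.of_discrete
  have : IsProbabilityMeasure ((Measure.infinitePi
      (fun i : Fin 4 => bern (baseP k p t (Sum.inl (e, i))))).map (gY e)) :=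
    Measure.isProbabilityMeasure_map hmg.aemeasurable
  by_cases he : e.2 = 2
  · simp only [baseP, he, if_true] at this ⊢
    refine measure_bool_ext ?_
    have hq0 : (1 - t) ^ 4 ≤ 1 := pow_le_one₀ (by linarith) (by linarith)
    have hq1 : 0 ≤ (1 - t) ^ 4 := pow_nonneg (by linarith) _
    rw [bern_real_true (by linarith) (by linarith), map_measureReal_apply hmg (by simp)]
    let B : Set (Fin 4 → Bool) := Set.pi (Finset.univ : Finset (Fin 4)) (fun _ => {false})
    have hset : gY e ⁻¹' {true} = Bᶜ := by
      ext b
      simp [gY, he, B, Set.mem_pi]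
    have hB : MeasurableSet B := Set.Finite.measurableSet (Set.toFinite _)
    rw [hset, probReal_compl_eq_one_sub hB, measureReal_def,
      Measure.infinitePi_pi _ (fun _ _ => Set.Finite.measurableSet (Set.toFinite _)), ENNReal.toReal_prod]
    simp only [← measureReal_def, bern_real_false ht0 ht1]
    simp
  · simp only [baseP, he, if_false]
    have : gY e = fun b => b 0 := by funext b; simp [gY, he]
    rw [this]
    exact (measurePreserving_eval_infinitePi (fun _ : Fin 4 => bern p) 0).map_eq

lemma cfgY_law (k : ℕ) {p t : ℝ} (hp0 : 0 ≤ p) (hp1 : p ≤ 1) (ht0 : 0 ≤ t) (ht1 : t ≤ 1) :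
    (baseM k p t).map (cfgY k) = slabMeasure k p (1 - (1 - t) ^ 4) := by
  have := block_law (fun i => bern (baseP k p t i)) (fun z : EdgeIdx × Fin 4 => (Sum.inl z : BaseIdx k))
    Sum.inl_injective gY (fun _ => Measurable.of_discrete)
  simp only [gY_law k hp0 hp1 ht0 ht1] at this
  rw [slabMeasure, bernoulliProduct_eq]
  exact this

lemma measurable_cfgX (k : ℕ) : Measurable (cfgX k) := by
  refine measurable_pi_lambda _ fun m => ?_
  exact (Measurable.of_discrete (f := gX k)).comp (by fun_prop)

lemma measurable_cfgY (k : ℕ) : Measurable (cfgY k) := by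
  refine measurable_pi_lambda _ fun m => ?_
  exact (Measurable.of_discrete (f := gY m)).comp (by fun_prop)

/-! ### Deterministic comparison -/

lemma openAdj_symm (k : ℕ) (η : Config) : ∀ {x y : Vtx}, OpenAdj k η x y → OpenAdj k η y x := by
  rintro x y ⟨i, h | h⟩
  · exact ⟨i, Or.inr h⟩
  · exact ⟨i, Or.inl h⟩

abbrev SConn (k : ℕ) (η : Config) : Vtx → Vtx → Prop := Relation.ReflTransGen (OpenAdj k η)

lemma sconn_symm {k : ℕ} {η : Config} {x y : Vtx} (h : SConn k η x y) : SConn k η y x := by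
  induction h with
  | refl => exact Relation.ReflTransGen.refl
  | tail _ h2 ih => exact Relation.ReflTransGen.head (openAdj_symm k η h2) ih

lemma column (k : ℕ) (η : Config) (a b : ℤ) (h : ∀ l : Fin k, η ((a, b, (l : ℤ)), 2) = true) :
    ∀ n : ℕ, n ≤ k → SConn k η (a, b, 0) (a, b, (n : ℤ)) := by
  intro n
  induction n with
  | zero => intro _; exact Relation.ReflTransGen.refl
  | succ n ih =>
    intro hn
    refine Relation.ReflTransGen.tail (ih (by omega)) ⟨2, Or.inl ⟨?_, ?_, ?_⟩⟩
    · simp [dvec]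
    · simp only [IsEdge, InSlab, dvec, Prod.snd_add]
      omega
    · exact h ⟨n, by omega⟩

lemma cfgX_true {k : ℕ} {ω : BaseIdx k → Bool} {m : V2} (h : cfgX k ω m = true) :
    (∃ j, ω (bits k (m, Sum.inl j)) = true) ∧ ∀ j, ω (bits k (m, Sum.inr j)) = true := by
  simpa only [cfgX, gX, decide_eq_true_eq] using h

lemma cfgY_vert {k : ℕ} {ω : BaseIdx k → Bool} {v : Vtx} (i : Fin 4)
    (h : ω (Sum.inl ((v, 2), i)) = true) : cfgY k ω (v, 2) = true := by
  simp only [cfgY, gY, if_true, decide_eq_true_eq]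
  exact ⟨i, h⟩

lemma stepH (k : ℕ) (ω : BaseIdx k → Bool) (a b : ℤ) (h : cfgX k ω ((a, b) + (a + 1, b)) = true) :
    SConn k (cfgY k ω) (a, b, 0) (a + 1, b, 0) := by
  obtain ⟨⟨j, hj⟩, hall⟩ := cfgX_true h
  have hb : ∀ j, bits k ((a, b) + (a + 1, b), j) = Sum.inl (bitsH k a b j) := by
    intro j
    have e1 : (a + (a + 1)) % 2 = 1 := by omega
    have e2 : (b + b) % 2 = 0 := by omega
    have e3 : (a + (a + 1)) / 2 = a := by omega
    have e4 : (b + b) / 2 = b := by omega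
    simp [bits, e1, e2, e3, e4]
  simp only [hb] at hj hall
  have c1 := column k (cfgY k ω) a b (fun l => cfgY_vert 0 (hall (Sum.inl l))) j (by omega)
  have c2 := column k (cfgY k ω) (a + 1) b (fun l => cfgY_vert 1 (hall (Sum.inr l))) j (by omega)
  refine (c1.tail ⟨0, Or.inl ⟨?_, ?_, ?_⟩⟩).trans (sconn_symm c2)
  · simp [dvec]
  · simp only [IsEdge, InSlab, dvec, Prod.snd_add]
    omega
  · simpa [cfgY, gY, bitsH, bitsV] using hj

lemma stepV (k : ℕ) (ω : BaseIdx k → Bool) (a b : ℤ) (h : cfgX k ω ((a, b) + (a, b + 1)) = true) :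
    SConn k (cfgY k ω) (a, b, 0) (a, b + 1, 0) := by
  obtain ⟨⟨j, hj⟩, hall⟩ := cfgX_true h
  have hb : ∀ j, bits k ((a, b) + (a, b + 1), j) = Sum.inl (bitsV k a b j) := by
    intro j
    have e1 : (a + a) % 2 = 0 := by omega
    have e2 : (b + (b + 1)) % 2 = 1 := by omega
    have e3 : (a + a) / 2 = a := by omega
    have e4 : (b + (b + 1)) / 2 = b := by omega
    simp [bits, e1, e2, e3, e4]
  simp only [hb] at hj hall
  have c1 := column k (cfgY k ω) a b (fun l => cfgY_vert 2 (hall (Sum.inl l))) j (by omega)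
  have c2 := column k (cfgY k ω) a (b + 1) (fun l => cfgY_vert 3 (hall (Sum.inr l))) j (by omega)
  refine (c1.tail ⟨1, Or.inl ⟨?_, ?_, ?_⟩⟩).trans (sconn_symm c2)
  · simp [dvec]
  · simp only [IsEdge, InSlab, dvec, Prod.snd_add]
    omega
  · simpa [cfgY, gY, bitsH, bitsV] using hj

lemma step_any (k : ℕ) (ω : BaseIdx k → Bool) (x y : V2) (h : Adj (cfgX k ω) Set.univ x y) :
    SConn k (cfgY k ω) (x.1, x.2, 0) (y.1, y.2, 0) := by
  obtain ⟨a, b⟩ := x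
  obtain ⟨c, d⟩ := y
  obtain ⟨_, _, hd, ho⟩ := h
  rw [mem_dirs] at hd
  simp only [Prod.fst_sub, Prod.snd_sub] at hd
  rcases hd with h | h | h | h
  · obtain rfl : c = a + 1 := by omega
    obtain rfl : d = b := by omega
    exact stepH k ω _ _ ho
  · obtain rfl : a = c + 1 := by omega
    obtain rfl : d = b := by omega
    rw [add_comm] at ho
    exact sconn_symm (stepH k ω _ _ ho)
  · obtain rfl : c = a := by omega
    obtain rfl : d = b + 1 := by omega
    exact stepV k ω _ _ ho
  · obtain rfl : c = a := by omega
    obtain rfl : b = d + 1 := by omega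
    rw [add_comm] at ho
    exact sconn_symm (stepV k ω _ _ ho)

lemma cluster_infinite (k : ℕ) (ω : BaseIdx k → Bool)
    (h : {v | Conn (cfgX k ω) Set.univ 0 v}.Infinite) : (cluster k (cfgY k ω) 0).Infinite := by
  have hinj : Function.Injective (fun v : V2 => ((v.1, v.2, 0) : Vtx)) := by
    rintro ⟨a, b⟩ ⟨c, d⟩ h
    simpa using h
  refine (h.image hinj.injOn).mono ?_
  rintro _ ⟨v, hv, rfl⟩
  have hv' : Conn (cfgX k ω) Set.univ 0 v := hv
  clear hv
  show SConn k (cfgY k ω) 0 (v.1, v.2, 0)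
  induction hv' with
  | refl => exact Relation.ReflTransGen.refl
  | tail _ h2 ih => exact ih.trans (step_any k ω _ _ h2)

lemma theta_pos (k : ℕ) {p t : ℝ} (hp0 : 0 < p) (hp1 : p < 1) (ht0 : 0 ≤ t) (ht1 : t ≤ 1)
    (h : 1 / 2 < (1 - (1 - p) ^ (k + 1)) * t ^ (2 * k)) : theta k p (1 - (1 - t) ^ 4) ≠ 0 := by
  have hlt : (1 - (1 - p) ^ (k + 1)) * t ^ (2 * k) < 1 := by
    have h1 : 0 < (1 - p) ^ (k + 1) := pow_pos (by linarith) _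
    have h2 : (1 - p) ^ (k + 1) ≤ 1 := pow_le_one₀ (by linarith) (by linarith)
    have h3 : t ^ (2 * k) ≤ 1 := pow_le_one₀ ht0 ht1
    have h4 : 0 ≤ t ^ (2 * k) := pow_nonneg ht0 _
    nlinarith
  obtain ⟨E, hE, hpos, hinf⟩ := perc_infinite h hlt
  rw [← cfgX_law k hp0.le hp1.le ht0 ht1, Measure.map_apply (measurable_cfgX k) hE] at hpos
  refine ne_of_gt (lt_of_lt_of_le hpos ?_)
  rw [theta, ← cfgY_law k hp0.le hp1.le ht0 ht1]
  refine le_trans (measure_mono ?_) (Measure.le_map_apply (measurable_cfgY k).aemeasurable _)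
  intro ω hω
  exact cluster_infinite k ω (hinf _ hω)

lemma pCrit_lt {k : ℕ} {p : ℝ} (hp : pCrit k < p) (hp1 : p ≤ 1) : 1 / 2 < 1 - (1 - p) ^ (k + 1) := by
  unfold pCrit at hp
  have h1 : 1 - p < (1 / 2 : ℝ) ^ ((1 : ℝ) / (k + 1)) := by linarith
  have h2 : (1 - p) ^ (k + 1) < ((1 / 2 : ℝ) ^ ((1 : ℝ) / (k + 1))) ^ (k + 1) :=
    pow_lt_pow_left₀ h1 (by linarith) (by omega)
  have h3 : ((1 / 2 : ℝ) ^ ((1 : ℝ) / (k + 1))) ^ (k + 1) = 1 / 2 := by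
    rw [← Real.rpow_natCast, ← Real.rpow_mul (by norm_num)]
    have : (1 : ℝ) / (k + 1) * ((k + 1 : ℕ) : ℝ) = 1 := by
      push_cast
      field_simp
    rw [this, Real.rpow_one]
  linarith

lemma pCrit_nonneg (k : ℕ) : 0 ≤ pCrit k := by
  unfold pCrit
  have : (1 / 2 : ℝ) ^ ((1 : ℝ) / (k + 1)) ≤ 1 :=
    Real.rpow_le_one (by norm_num) (by norm_num) (by positivity)
  linarith

lemma exists_t0 (k : ℕ) {p' : ℝ} (h : 1 / 2 < p') :
    ∃ t0 : ℝ, 0 ≤ t0 ∧ t0 < 1 ∧ ∀ t, t0 ≤ t → 1 / 2 < p' * t ^ (2 * k) := by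
  have hc : Filter.Tendsto (fun t : ℝ => p' * t ^ (2 * k)) (nhds 1) (nhds (p' * 1 ^ (2 * k))) :=
    (by fun_prop : Continuous (fun t : ℝ => p' * t ^ (2 * k))).tendsto 1
  have hev : ∀ᶠ t in nhds (1 : ℝ), 1 / 2 < p' * t ^ (2 * k) :=
    hc.eventually (lt_mem_nhds (by simpa using h))
  obtain ⟨ε, hε, hball⟩ := Metric.eventually_nhds_iff.1 hev
  refine ⟨max 0 (1 - ε / 2), le_max_left _ _, max_lt (by norm_num) (by linarith), fun t ht => ?_⟩
  have h1 : 1 - ε / 2 ≤ max 0 (1 - ε / 2) := le_max_right _ _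
  have h2 : max 0 (1 - ε / 2) < 1 := max_lt (by norm_num) (by linarith)
  have h3 := hball (y := max 0 (1 - ε / 2)) (by rw [Real.dist_eq, abs_lt]; constructor <;> linarith)
  have h4 : max 0 (1 - ε / 2) ^ (2 * k) ≤ t ^ (2 * k) := pow_le_pow_left₀ (le_max_left _ _) ht _
  nlinarith

theorem qc_lt_one_aux (k : ℕ) (p : ℝ) (hp : p ∈ Set.Ioc (pCrit k) (1 / 2)) : qc k p < 1 := by
  have hp0 : 0 < p := lt_of_le_of_lt (pCrit_nonneg k) hp.1
  have hp1 : p < 1 := by linarith [hp.2]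
  obtain ⟨t0, ht0, ht1, ht⟩ := exists_t0 k (pCrit_lt hp.1 hp1.le)
  have hq : (1 - t0) ^ 4 ≤ 1 := pow_le_one₀ (by linarith) (by linarith)
  have hq' : 0 < (1 - t0) ^ 4 := pow_pos (by linarith) _
  refine lt_of_le_of_lt (b := 1 - (1 - t0) ^ 4) ?_ (by linarith)
  unfold qc
  refine Real.sSup_le ?_ (by linarith)
  rintro q ⟨⟨hq0, hq1⟩, hθ⟩
  by_contra hcon
  push Not at hcon
  let s : ℝ := (1 - q) ^ ((1 : ℝ) / 4)
  have hs0 : 0 ≤ s := Real.rpow_nonneg (by linarith) _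
  have hs4 : s ^ 4 = 1 - q := by
    have : ((4 : ℕ) : ℝ) = 4 := by norm_num
    rw [← Real.rpow_natCast, ← Real.rpow_mul (by linarith), this]
    norm_num
  have hs : s ≤ 1 - t0 := by
    refine le_of_pow_le_pow_left₀ (n := 4) (by norm_num) (by linarith) ?_
    rw [hs4]; linarith
  have hth := theta_pos k (t := 1 - s) hp0 hp1 (by linarith) (by linarith) (ht _ (by linarith))
  apply hth
  have : 1 - (1 - (1 - s)) ^ 4 = q := by
    rw [sub_sub_cancel, hs4]; ring
  rw [this]; exact hθ

/-- **Lemma 2**, first part: for every `p ∈ (p_k, 1/2]`, `q_c(p) < 1`. -/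
theorem qc_lt_one (k : ℕ) (p : ℝ) (hp : p ∈ Set.Ioc (pCrit k) (1 / 2)) :
    qc k p < 1 := qc_lt_one_aux k p hp

end AnisoSlab
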